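/- arXiv:1212.4435 — 2 statements merged into one kernel-verified Lean document; each statement's English description precedes it below -/
import Mathlib

section
/- For every integer r ≥ 1 there exists a constant K < ∞ depending only on r such that for every ω ∈ LO_0 and every t ≥ 1, ∫ |X(η)|^r dP_t(ω, dη) ≤ K·t^r (the integral being over η ∈ LO). -/
open MeasureTheory ProbabilityTheory Filter Topology

noncomputable section

/-- The configuration space of the East model on `ℤ`: `0` ↔ `false` (empty), `1` ↔ `true`. -/
abbrev Config : Type := ℤ → Bool

/-- The configuration `ω` flipped at site `x`. -/
def flipAt (ω : Config) (x : ℤ) : Config := fun y => if y = x then !ω x else ω y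

/-- `f` depends only on the coordinates in `S`. -/
def DependsOnF (f : Config → ℝ) (S : Set ℤ) : Prop :=
  ∀ ω ω' : Config, (∀ x ∈ S, ω x = ω' x) → f ω = f ω'

/-- The set `A` depends only on the coordinates in `S`. -/
def DependsOnSet (A : Set Config) (S : Set ℤ) : Prop :=
  ∀ ω ω' : Config, (∀ x ∈ S, ω x = ω' x) → (ω ∈ A ↔ ω' ∈ A)

/-- A cylinder (local) function: depends on finitely many coordinates. -/
def IsCylinder (f : Config → ℝ) : Prop := ∃ S : Finset ℤ, DependsOnF f ↑S

/-- The East generator at density `p` of ones. -/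
def eastGen (p : ℝ) (f : Config → ℝ) (ω : Config) : ℝ :=
  ∑' x : ℤ, (if ω (x + 1) = false then (1 : ℝ) else 0) *
    (if ω x = false then p else 1 - p) * (f (flipAt ω x) - f ω)

/-- Spatial translation: `(shift y ω) x = ω (x + y)`. -/
def shift (y : ℤ) (ω : Config) : Config := fun x => ω (x + y)

/-- Left-occupied configurations: identically `1` on a left half-line, with an empty site. -/
def LO : Set Config := {ω | (∃ y : ℤ, ∀ x < y, ω x = true) ∧ ∃ x, ω x = false}

/-- The front: position of the left-most zero. -/
def front (ω : Config) : ℤ := sInf {x : ℤ | ω x = false}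

/-- Left-occupied configurations with front at the origin. -/
def LO₀ : Set Config := {ω ∈ LO | front ω = 0}

/-- The configuration seen at distance `L` behind the front. -/
def θL (L : ℤ) (ω : Config) : Config := fun x =>
  if x < 0 then true else if x = 0 then false else ω (front ω + L + x)

/-- `f` averaged over the coordinate at site `1` w.r.t. Bernoulli(p). -/
def avg1 (p : ℝ) (f : Config → ℝ) (ω : Config) : ℝ :=
  p * f (Function.update ω 1 true) + (1 - p) * f (Function.update ω 1 false)

/-- The East process on `ℤ` at density `p`, together with its equilibrium measure. -/
structure EastProcess where
  /-- equilibrium density of ones -/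
  p : ℝ
  hp0 : 0 < p
  hp1 : p < 1
  /-- the Markov semigroup -/
  P : ℝ → Kernel Config Config
  markov : ∀ t : ℝ, IsMarkovKernel (P t)
  P0 : P 0 = Kernel.id
  semigroup : ∀ s t : ℝ, 0 ≤ s → 0 ≤ t → P (t + s) = (P s).comp (P t)
  feller : ∀ t : ℝ, 0 ≤ t → ∀ f : Config → ℝ, Continuous f →
    Continuous fun ω : Config => ∫ η, f η ∂(P t ω)
  timeCont : ∀ f : Config → ℝ, Continuous f → ∀ ω : Config,
    Continuous fun t : ℝ => ∫ η, f η ∂(P t ω)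
  shiftComm : ∀ t : ℝ, 0 ≤ t → ∀ y : ℤ, ∀ ω : Config,
    P t (shift y ω) = Measure.map (shift y) (P t ω)
  generator : ∀ f : Config → ℝ, IsCylinder f → ∀ ω : Config,
    HasDerivWithinAt (fun u : ℝ => ∫ η, f η ∂(P u ω)) (eastGen p f ω) (Set.Ici 0) 0
  /-- the product Bernoulli(p) measure -/
  μ : Measure Config
  μprob : IsProbabilityMeasure μ
  μprod : ∀ (S : Finset ℤ) (σ : ℤ → Bool),
    μ {ω : Config | ∀ x ∈ S, ω x = σ x} = ∏ x ∈ S, ENNReal.ofReal (if σ x then p else 1 - p)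
  /-- LO is stable for the dynamics -/
  loStable : ∀ t : ℝ, 0 ≤ t → ∀ ω ∈ LO, P t ω LO = 1

/-- The set of Rayleigh quotients defining the spectral gap. -/
def gapSet (E : EastProcess) : Set ℝ :=
  {r | ∃ f : Config → ℝ, IsCylinder f ∧ 0 < variance f E.μ ∧
    r = (-∫ ω, f ω * eastGen E.p f ω ∂E.μ) / variance f E.μ}

/-- The spectral gap of the East process. -/
def gap (E : EastProcess) : ℝ := sInf (gapSet E)

/-- The product measure `μ̃`: all ones on the negative half-line, a zero at the origin,
Bernoulli(p) on the positive half-line. -/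
def IsMuTilde (p : ℝ) (μt : Measure Config) : Prop :=
  IsProbabilityMeasure μt ∧
  ∀ (S : Finset ℤ) (σ : ℤ → Bool),
    μt {ω : Config | ∀ x ∈ S, ω x = σ x} =
      ∏ x ∈ S, ENNReal.ofReal
        (if x < 0 then (if σ x then 1 else 0)
         else if x = 0 then (if σ x then 0 else 1)
         else (if σ x then p else 1 - p))

/-- The law at time `t` of the process seen from the front started from `π`. -/
def Qt (E : EastProcess) (t : ℝ) (π : Measure Config) : Measure Config :=
  Measure.map (θL 0) (π.bind fun ω => E.P t ω)

/-!
For `a > 0` the function `f = e^{a |X_N|}`, with `X_N` the front truncated to `[-N, N + 1]`, is a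
cylinder function. A legal flip moves `X_N` by at most one site, and only two flips move it at all,
so `𝓛 f ≤ l f` with `l = 2 (e^a - 1)`. Hence `f` is the `l`-resolvent of the nonnegative function
`l f - 𝓛 f`, which gives `P_t f ≤ e^{l t} f`. Letting `N → ∞` by Fatou's lemma bounds the
exponential moments of the front; the choice `a = 1 / t` keeps `l t` bounded, and
`x ^ r ≤ r! t ^ r e^{x / t}` turns this into polynomial moments.
-/

open scoped NNReal

/-! ### Feller semigroups on a compact space -/

/-- A conservative Feller semigroup on `X`: a convolution semigroup of Markov kernels that acts on
continuous functions and is pointwise continuous in time. -/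
structure FellerSemigroup (X : Type*) [TopologicalSpace X] [MeasurableSpace X] where
  kernel : ℝ≥0 → Kernel X X
  isMarkovKernel : ∀ t, IsMarkovKernel (kernel t)
  kernel_zero : kernel 0 = Kernel.id
  kernel_add : ∀ s t, kernel (s + t) = kernel t ∘ₖ kernel s
  continuous_integral : ∀ t (f : C(X, ℝ)), Continuous fun x => ∫ y, f y ∂kernel t x
  continuous_time : ∀ (f : C(X, ℝ)) x, Continuous fun t => ∫ y, f y ∂kernel t x

namespace FellerSemigroup

attribute [instance] FellerSemigroup.isMarkovKernel

variable {X : Type*} [TopologicalSpace X] [CompactSpace X] [MeasurableSpace X]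
  [OpensMeasurableSpace X] (S : FellerSemigroup X)

lemma integrable_kernel (t : ℝ≥0) (f : C(X, ℝ)) (x : X) : Integrable f (S.kernel t x) :=
  f.continuous.integrable_of_hasCompactSupport (.of_compactSpace f)

/-- The action `P_t f` of the semigroup on continuous functions. -/
def act (t : ℝ≥0) : C(X, ℝ) →ₗ[ℝ] C(X, ℝ) where
  toFun f := ⟨fun x => ∫ y, f y ∂S.kernel t x, S.continuous_integral t f⟩
  map_add' f g := ContinuousMap.ext fun x =>
    integral_add (S.integrable_kernel t f x) (S.integrable_kernel t g x)
  map_smul' c f := ContinuousMap.ext fun _ => integral_const_mul c f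

lemma act_apply (t : ℝ≥0) (f : C(X, ℝ)) (x : X) : S.act t f x = ∫ y, f y ∂S.kernel t x := rfl

lemma act_zero (f : C(X, ℝ)) : S.act 0 f = f := by
  ext x
  simp [act_apply, S.kernel_zero, Kernel.id_apply,
    integral_dirac' _ _ f.continuous.stronglyMeasurable]

lemma act_add (s t : ℝ≥0) (f : C(X, ℝ)) : S.act (s + t) f = S.act s (S.act t f) := by
  ext x
  have hf := S.integrable_kernel (s + t) f x
  simp only [act_apply]
  rw [S.kernel_add] at hf ⊢
  exact Kernel.integral_comp hf

lemma act_nonneg (t : ℝ≥0) {f : C(X, ℝ)} (hf : 0 ≤ f) : 0 ≤ S.act t f := fun _ =>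
  integral_nonneg hf

lemma act_apply_le_of_forall_le (t : ℝ≥0) {f : C(X, ℝ)} {c : ℝ} (hf : ∀ y, f y ≤ c) (x : X) :
    S.act t f x ≤ c := by
  simpa [act_apply] using integral_mono (S.integrable_kernel t f x) (integrable_const c) hf

lemma abs_act_apply_le_norm (t : ℝ≥0) (f : C(X, ℝ)) (x : X) : |S.act t f x| ≤ ‖f‖ := by
  simpa [act_apply] using
    norm_integral_le_of_norm_le_const (μ := S.kernel t x) (ae_of_all _ f.norm_coe_le_norm)

/-- `S.HasGenerator f g` says that `g` is the image of `f` under the pointwise generator of `S`,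
i.e. `g x` is the right derivative of `t ↦ P_t f x` at `0` for every `x`. -/
def HasGenerator (f g : C(X, ℝ)) : Prop :=
  ∀ x, HasDerivWithinAt (fun t : ℝ => S.act t.toNNReal f x) (g x) (Set.Ici 0) 0

variable {S}

lemma HasGenerator.sub {f₁ f₂ g₁ g₂ : C(X, ℝ)} (h₁ : S.HasGenerator f₁ g₁)
    (h₂ : S.HasGenerator f₂ g₂) : S.HasGenerator (f₁ - f₂) (g₁ - g₂) := fun x => by
  simp only [map_sub]
  exact (h₁ x).sub (h₂ x)

lemma HasGenerator.nonpos_of_forall_le {f g : C(X, ℝ)} (h : S.HasGenerator f g) {x : X}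
    (hx : ∀ y, f y ≤ f x) : g x ≤ 0 := by
  have hmax : IsLocalMaxOn (fun t : ℝ => S.act t.toNNReal f x) (Set.Ici 0) 0 :=
    .of_forall fun t => by
      simpa [act_zero] using S.act_apply_le_of_forall_le t.toNNReal hx x
  have hcone : (1 : ℝ) ∈ posTangentConeAt (Set.Ici 0) 0 :=
    mem_posTangentConeAt_of_segment_subset fun t ht => by
      rw [segment_eq_Icc (by simp)] at ht
      exact ht.1
  simpa using hmax.hasFDerivWithinAt_nonpos (h x).hasFDerivWithinAt hcone

lemma HasGenerator.nonpos_of_smul {l : ℝ} (hl : 0 < l) {f : C(X, ℝ)}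
    (h : S.HasGenerator f (l • f)) : f ≤ 0 := by
  intro x
  have : Nonempty X := ⟨x⟩
  obtain ⟨m, hm⟩ := f.continuous.exists_forall_ge_of_hasCompactSupport (.of_compactSpace f)
  exact (hm x).trans (nonpos_of_mul_nonpos_right (h.nonpos_of_forall_le hm) hl)

variable (S)

/-- The integrand `e^{-l s} P_s f x` of the resolvent; at negative `s` it is `e^{-l s} f x`. -/
def resolventIntegrand (l : ℝ) (f : C(X, ℝ)) (x : X) (s : ℝ) : ℝ :=
  Real.exp (-l * s) * S.act s.toNNReal f x

lemma continuous_resolventIntegrand (l : ℝ) (f : C(X, ℝ)) (x : X) :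
    Continuous (S.resolventIntegrand l f x) :=
  (by fun_prop : Continuous fun s : ℝ => Real.exp (-l * s)).mul
    ((S.continuous_time f x).comp continuous_real_toNNReal)

lemma continuous_resolventIntegrand_left (l : ℝ) (f : C(X, ℝ)) (s : ℝ) :
    Continuous fun x => S.resolventIntegrand l f x s :=
  continuous_const.mul (S.act s.toNNReal f).continuous

lemma stronglyMeasurable_resolventIntegrand (l : ℝ) (f : C(X, ℝ)) :
    StronglyMeasurable fun z : X × ℝ => S.resolventIntegrand l f z.1 z.2 :=
  (stronglyMeasurable_uncurry_of_continuous_of_stronglyMeasurable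
    (u := fun s x => S.resolventIntegrand l f x s) (S.continuous_resolventIntegrand l f)
    fun s => (S.continuous_resolventIntegrand_left l f s).stronglyMeasurable).comp_measurable
      measurable_swap

lemma norm_resolventIntegrand_le (l : ℝ) (f : C(X, ℝ)) (x : X) (s : ℝ) :
    ‖S.resolventIntegrand l f x s‖ ≤ ‖f‖ * Real.exp (-l * s) := by
  rw [resolventIntegrand, norm_mul, Real.norm_of_nonneg (Real.exp_pos _).le, mul_comm]
  gcongr
  exact S.abs_act_apply_le_norm _ f x

lemma resolventIntegrand_add (l : ℝ) (f : C(X, ℝ)) (x : X) (t : ℝ≥0) {s : ℝ} (hs : 0 ≤ s) :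
    S.resolventIntegrand l f x (t + s) =
      Real.exp (-l * t) * ∫ y, S.resolventIntegrand l f y s ∂S.kernel t x := by
  simp only [resolventIntegrand]
  rw [integral_const_mul, ← act_apply, ← act_add, Real.toNNReal_add t.coe_nonneg hs,
    Real.toNNReal_coe, mul_add, Real.exp_add, mul_assoc]

lemma integrableOn_resolventIntegrand {l : ℝ} (hl : 0 < l) (f : C(X, ℝ)) (x : X) (a : ℝ) :
    IntegrableOn (S.resolventIntegrand l f x) (Set.Ioi a) :=
  ((exp_neg_integrableOn_Ioi a hl).const_mul ‖f‖).mono'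
    (S.continuous_resolventIntegrand l f x).aestronglyMeasurable
    (ae_of_all _ (S.norm_resolventIntegrand_le l f x))

variable [FirstCountableTopology X] {l : ℝ} (hl : 0 < l)

/-- The resolvent `R_l f = ∫₀^∞ e^{-l s} P_s f ds` as an operator on continuous functions. -/
def resolvent (f : C(X, ℝ)) : C(X, ℝ) where
  toFun x := ∫ s in Set.Ioi 0, S.resolventIntegrand l f x s
  continuous_toFun := continuous_of_dominated
    (fun x => (S.continuous_resolventIntegrand l f x).aestronglyMeasurable)
    (fun x => ae_of_all _ (S.norm_resolventIntegrand_le l f x))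
    ((exp_neg_integrableOn_Ioi 0 hl).const_mul ‖f‖)
    (ae_of_all _ (S.continuous_resolventIntegrand_left l f))

lemma resolvent_apply (f : C(X, ℝ)) (x : X) :
    S.resolvent hl f x = ∫ s in Set.Ioi 0, S.resolventIntegrand l f x s := rfl

lemma act_resolvent_eq_integral_integral (f : C(X, ℝ)) (t : ℝ≥0) (x : X) :
    S.act t (S.resolvent hl f) x =
      ∫ s in Set.Ioi 0, ∫ y, S.resolventIntegrand l f y s ∂S.kernel t x := by
  refine integral_integral_swap ?_
  refine Integrable.mono' ((integrable_const ‖f‖).mul_prod (exp_neg_integrableOn_Ioi 0 hl))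
    (S.stronglyMeasurable_resolventIntegrand l f).aestronglyMeasurable (ae_of_all _ ?_)
  exact fun z => S.norm_resolventIntegrand_le l f z.1 z.2

lemma act_resolvent_apply (f : C(X, ℝ)) (t : ℝ≥0) (x : X) :
    S.act t (S.resolvent hl f) x =
      Real.exp (l * t) * ∫ s in Set.Ioi (t : ℝ), S.resolventIntegrand l f x s := by
  have hshift := (measurePreserving_add_left volume (t : ℝ)).setIntegral_preimage_emb
    (measurableEmbedding_addLeft _) (S.resolventIntegrand l f x) (Set.Ioi t)
  simp only [Set.preimage_const_add_Ioi, sub_self] at hshift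
  rw [← hshift, setIntegral_congr_fun measurableSet_Ioi
    fun s hs => S.resolventIntegrand_add l f x t (le_of_lt hs), integral_const_mul, ← mul_assoc,
    ← Real.exp_add, S.act_resolvent_eq_integral_integral hl]
  simp

lemma hasGenerator_resolvent (f : C(X, ℝ)) :
    S.HasGenerator (S.resolvent hl f) (l • S.resolvent hl f - f) := by
  intro x
  set φ := S.resolventIntegrand l f x with hφ
  have hφ_cont : Continuous φ := S.continuous_resolventIntegrand l f x
  have hφ_zero : φ 0 = f x := by simp [hφ, resolventIntegrand, act_zero]
  have hprimitive : HasDerivAt (fun t => ∫ s in (0 : ℝ)..t, φ s) (f x) 0 :=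
    hφ_zero ▸ hφ_cont.integral_hasStrictDerivAt 0 0 |>.hasDerivAt
  have hexp : HasDerivAt (fun t : ℝ => Real.exp (l * t)) l 0 := by
    simpa using ((hasDerivAt_id (0 : ℝ)).const_mul l).exp
  have hproduct : HasDerivAt
      (fun t => Real.exp (l * t) * (S.resolvent hl f x - ∫ s in (0 : ℝ)..t, φ s))
      ((l • S.resolvent hl f - f) x) 0 := by
    refine (hexp.mul (hprimitive.const_sub (S.resolvent hl f x))).congr_deriv ?_
    simp [sub_eq_add_neg]
  refine hproduct.hasDerivWithinAt.congr_of_mem (fun t ht => ?_) Set.self_mem_Ici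
  rw [act_resolvent_apply, Real.coe_toNNReal t ht, resolvent_apply,
    ← intervalIntegral.integral_interval_add_Ioi (S.integrableOn_resolventIntegrand hl f x 0)
      (S.integrableOn_resolventIntegrand hl f x t), add_sub_cancel_left]

variable {S}

lemma HasGenerator.eq_resolvent {f g : C(X, ℝ)} (h : S.HasGenerator f g) :
    f = S.resolvent hl (l • f - g) := by
  set R := S.resolvent hl (l • f - g)
  have hR : S.HasGenerator R (l • R - (l • f - g)) := S.hasGenerator_resolvent hl _
  have h_sub : S.HasGenerator (f - R) (l • (f - R)) := by
    convert h.sub hR using 1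
    module
  have h_sub' : S.HasGenerator (R - f) (l • (R - f)) := by
    convert hR.sub h using 1
    module
  exact le_antisymm (sub_nonpos.1 (h_sub.nonpos_of_smul hl))
    (sub_nonpos.1 (h_sub'.nonpos_of_smul hl))

variable (S) in
lemma act_resolvent_apply_le {h : C(X, ℝ)} (hh : 0 ≤ h) (t : ℝ≥0) (x : X) :
    S.act t (S.resolvent hl h) x ≤ Real.exp (l * t) * S.resolvent hl h x := by
  rw [act_resolvent_apply]
  refine mul_le_mul_of_nonneg_left ?_ (Real.exp_pos _).le
  refine setIntegral_mono_set (S.integrableOn_resolventIntegrand hl h x 0)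
    (ae_of_all _ fun s => ?_) (Set.Ioi_subset_Ioi t.2).eventuallyLE
  exact mul_nonneg (Real.exp_pos _).le (S.act_nonneg _ hh x)

include hl in
/-- Differentiating `t ↦ P_t f` at positive times would need the difference quotients at `0` to
converge uniformly. Writing `f` as the potential of the nonnegative function `l f - g` avoids this:
only pointwise derivatives at `0` enter. -/
theorem HasGenerator.act_apply_le_exp_mul {f g : C(X, ℝ)} (h : S.HasGenerator f g)
    (hg : g ≤ l • f) (t : ℝ≥0) (x : X) : S.act t f x ≤ Real.exp (l * t) * f x := by
  rw [h.eq_resolvent hl]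
  exact S.act_resolvent_apply_le hl (sub_nonneg.2 hg) t x

end FellerSemigroup

/-! ### The East semigroup -/

lemma flipAt_of_ne {ω : Config} {x y : ℤ} (h : y ≠ x) : flipAt ω x y = ω y := by
  simp [flipAt, h]

lemma flipAt_flipAt (ω : Config) (x : ℤ) : flipAt (flipAt ω x) x = ω := by
  ext y
  by_cases h : y = x <;> simp [flipAt, h]

lemma DependsOnF.flipAt_eq {f : Config → ℝ} {S : Set ℤ} (hf : DependsOnF f S) {x : ℤ}
    (hx : x ∉ S) (ω : Config) : f (flipAt ω x) = f ω :=
  hf _ _ fun _ hy => flipAt_of_ne (ne_of_mem_of_not_mem hy hx)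

lemma DependsOnF.flipAt_congr {f : Config → ℝ} {S : Set ℤ} (hf : DependsOnF f S) {ω ω' : Config}
    (h : ∀ x ∈ S, ω x = ω' x) {x : ℤ} (hx : x ∈ S) : f (flipAt ω x) = f (flipAt ω' x) :=
  hf _ _ fun y hy => by simp only [flipAt, h x hx, h y hy]

namespace IsCylinder

variable {f : Config → ℝ} (hf : IsCylinder f)
include hf

protected lemma continuous : Continuous f := by
  obtain ⟨S, hS⟩ := hf
  obtain ⟨g, rfl⟩ := dependsOn_iff_exists_comp.1 (fun _ _ h => hS _ _ h : DependsOn f (S : Set ℤ))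
  exact continuous_of_discreteTopology.comp (Pi.continuous_domRestrict _)

protected lemma eastGen (p : ℝ) : IsCylinder (eastGen p f) := by
  obtain ⟨S, hS⟩ := hf
  refine ⟨S ∪ S.image (· + 1), fun ω ω' h => tsum_congr fun x => ?_⟩
  have hω : ∀ y ∈ S, ω y = ω' y := fun y hy => h y (by simp [hy])
  by_cases hx : x ∈ S
  · rw [h (x + 1) (by simp [hx]), hω x hx, hS.flipAt_congr hω hx, hS ω ω' hω]
  · rw [hS.flipAt_eq hx, hS.flipAt_eq hx]
    simp

end IsCylinder

lemma eastGen_le_card_mul {p : ℝ} (hp0 : 0 ≤ p) (hp1 : p ≤ 1) {f : Config → ℝ} {ω : Config}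
    {s : Finset ℤ} {c : ℝ} (hc : 0 ≤ c)
    (h_off : ∀ x ∉ s, ω (x + 1) = false → f (flipAt ω x) = f ω)
    (h_on : ∀ x ∈ s, ω (x + 1) = false → f (flipAt ω x) - f ω ≤ c) :
    eastGen p f ω ≤ s.card * c := by
  rw [eastGen, tsum_eq_sum (s := s), ← nsmul_eq_mul]
  · refine Finset.sum_le_card_nsmul _ _ _ fun x hx => ?_
    by_cases h : ω (x + 1) = false
    · rw [if_pos h, one_mul]
      have hrate_nonneg : 0 ≤ (if ω x = false then p else 1 - p) := by split_ifs <;> linarith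
      have hrate_le_one : (if ω x = false then p else 1 - p) ≤ 1 := by split_ifs <;> linarith
      exact (mul_le_mul_of_nonneg_left (h_on x hx h) hrate_nonneg).trans
        (mul_le_of_le_one_left hc hrate_le_one)
    · simpa [h] using hc
  · intro x hx
    by_cases h : ω (x + 1) = false
    · simp [h_off x hx h]
    · simp [h]

namespace EastProcess

variable (E : EastProcess)

/-- The kernels of the East process at nonnegative times, as a Feller semigroup. -/
def fellerSemigroup : FellerSemigroup Config where
  kernel t := E.P t
  isMarkovKernel t := E.markov t
  kernel_zero := E.P0
  kernel_add s t := E.semigroup t s t.2 s.2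
  continuous_integral t f := E.feller t t.2 f f.continuous
  continuous_time f ω := (E.timeCont f f.continuous ω).comp NNReal.continuous_coe

lemma hasGenerator {f : Config → ℝ} (hf : IsCylinder f) :
    E.fellerSemigroup.HasGenerator ⟨f, hf.continuous⟩
      ⟨eastGen E.p f, (hf.eastGen E.p).continuous⟩ :=
  fun ω => (E.generator f hf ω).congr_of_mem
    (fun t ht => by simp [FellerSemigroup.act_apply, fellerSemigroup, Real.coe_toNNReal t ht])
    Set.self_mem_Ici

lemma integrable_of_isCylinder {f : Config → ℝ} (hf : IsCylinder f) (t : ℝ) (ω : Config) :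
    Integrable f (E.P t ω) :=
  have := E.markov t
  hf.continuous.integrable_of_hasCompactSupport (.of_compactSpace f)

lemma integral_le_exp_mul {f : Config → ℝ} (hf : IsCylinder f) {l : ℝ} (hl : 0 < l)
    (hL : ∀ ω, eastGen E.p f ω ≤ l * f ω) {t : ℝ} (ht : 0 ≤ t) (ω : Config) :
    ∫ η, f η ∂E.P t ω ≤ Real.exp (l * t) * f ω :=
  (E.hasGenerator hf).act_apply_le_exp_mul hl hL ⟨t, ht⟩ ω

end EastProcess

/-! ### The truncated front -/

/-- The sites at which the front truncated to `[-N, N + 1]` may sit: the empty sites of `[-N, N]`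
together with everything to the right of `N`. -/
def truncFrontSites (N : ℕ) (ω : Config) : Set ℤ := {x | -(N : ℤ) ≤ x ∧ (ω x = false ∨ (N : ℤ) < x)}

/-- The left-most zero in `[-N, N]`, or `N + 1` if there is none: a cylinder approximation of the
front. -/
def truncFront (N : ℕ) (ω : Config) : ℤ := sInf (truncFrontSites N ω)

section TruncFront

variable {N : ℕ} {ω : Config} {x y : ℤ}

lemma bddBelow_truncFrontSites : BddBelow (truncFrontSites N ω) := ⟨-(N : ℤ), fun _ hx => hx.1⟩

lemma truncFront_mem : truncFront N ω ∈ truncFrontSites N ω :=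
  Int.csInf_mem ⟨(N : ℤ) + 1, by omega, Or.inr (by omega)⟩ bddBelow_truncFrontSites

lemma truncFront_le (hx : x ∈ truncFrontSites N ω) : truncFront N ω ≤ x :=
  csInf_le bddBelow_truncFrontSites hx

lemma mem_truncFrontSites_flipAt (h : y ≠ x) :
    y ∈ truncFrontSites N (flipAt ω x) ↔ y ∈ truncFrontSites N ω := by
  simp [truncFrontSites, flipAt_of_ne h]

lemma add_one_mem_truncFrontSites (hx : -(N : ℤ) ≤ x) (h : ω (x + 1) = false) :
    x + 1 ∈ truncFrontSites N ω := ⟨by omega, Or.inl h⟩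

lemma truncFront_flipAt_le_of_ne (h : truncFront N ω ≠ x) :
    truncFront N (flipAt ω x) ≤ truncFront N ω :=
  truncFront_le ((mem_truncFrontSites_flipAt h).2 truncFront_mem)

lemma truncFront_flipAt_le (h : ω (x + 1) = false) :
    truncFront N (flipAt ω x) ≤ truncFront N ω + 1 := by
  obtain rfl | hx := eq_or_ne (truncFront N ω) x
  · exact truncFront_le ((mem_truncFrontSites_flipAt (by omega)).2
      (add_one_mem_truncFrontSites truncFront_mem.1 h))
  · exact (truncFront_flipAt_le_of_ne hx).trans (by omega)

lemma le_truncFront_flipAt (h : ω (x + 1) = false) :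
    truncFront N ω ≤ truncFront N (flipAt ω x) + 1 := by
  simpa only [flipAt_flipAt] using truncFront_flipAt_le (N := N) (ω := flipAt ω x) (x := x)
    (by rwa [flipAt_of_ne (by omega)])

lemma abs_truncFront_flipAt_le (h : ω (x + 1) = false) :
    |(truncFront N (flipAt ω x) : ℝ)| ≤ |(truncFront N ω : ℝ)| + 1 := by
  have hdist : |truncFront N (flipAt ω x) - truncFront N ω| ≤ 1 :=
    abs_sub_le_iff.2 ⟨sub_le_iff_le_add'.2 (truncFront_flipAt_le h),
      sub_le_iff_le_add'.2 (le_truncFront_flipAt h)⟩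
  have habs := abs_sub_abs_le_abs_sub (truncFront N (flipAt ω x)) (truncFront N ω)
  exact_mod_cast (by linarith : |truncFront N (flipAt ω x)| ≤ |truncFront N ω| + 1)

lemma truncFront_flipAt_eq (h : ω (x + 1) = false) (h₀ : truncFront N ω ≠ x)
    (h₁ : truncFront N ω ≠ x + 1) : truncFront N (flipAt ω x) = truncFront N ω := by
  have hle := truncFront_flipAt_le_of_ne h₀
  refine hle.antisymm ?_
  obtain hx | hx := eq_or_ne (truncFront N (flipAt ω x)) x
  · have := truncFront_le
      (add_one_mem_truncFrontSites (hx ▸ (truncFront_mem (ω := flipAt ω x)).1 : -(N : ℤ) ≤ x) h)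
    omega
  · exact truncFront_le ((mem_truncFrontSites_flipAt hx).1 truncFront_mem)

lemma truncFront_eq_front (hω : ω ∈ LO) (hN : |front ω| ≤ N) : truncFront N ω = front ω := by
  obtain ⟨⟨z, hz⟩, hne⟩ := hω
  have hbdd : BddBelow {x : ℤ | ω x = false} :=
    ⟨z, fun x hx => not_lt.1 fun hlt => by simp_all [hz x hlt]⟩
  have hfront : ω (front ω) = false := Int.csInf_mem hne hbdd
  rw [abs_le] at hN
  refine le_antisymm (truncFront_le ⟨hN.1, Or.inl hfront⟩) ?_
  obtain h | h := (truncFront_mem (N := N) (ω := ω)).2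
  · exact csInf_le hbdd h
  · omega

lemma eventually_truncFront_eq_front (hω : ω ∈ LO) : ∀ᶠ N in atTop, truncFront N ω = front ω := by
  filter_upwards [eventually_ge_atTop (front ω).natAbs] with N hN
  exact truncFront_eq_front hω (Int.natCast_natAbs (front ω) ▸ mod_cast hN)

end TruncFront

/-- The Lyapunov function `e^{a |X_N|}`, where `X_N` is the truncated front. -/
def expTruncFront (a : ℝ) (N : ℕ) (ω : Config) : ℝ := Real.exp (a * |(truncFront N ω : ℝ)|)

lemma isCylinder_expTruncFront (a : ℝ) (N : ℕ) : IsCylinder (expTruncFront a N) := by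
  refine ⟨Finset.Icc (-N) N, fun ω ω' h => ?_⟩
  have : truncFrontSites N ω = truncFrontSites N ω' := by
    ext x
    refine and_congr_right fun hx => ?_
    obtain hxN | hxN := lt_or_ge (N : ℤ) x
    · simp [hxN]
    · rw [h x (by simp [hx, hxN])]
  rw [expTruncFront, expTruncFront, truncFront, truncFront, this]

lemma expTruncFront_flipAt_sub_le {a : ℝ} (ha : 0 ≤ a) (N : ℕ) {ω : Config} {x : ℤ}
    (h : ω (x + 1) = false) :
    expTruncFront a N (flipAt ω x) - expTruncFront a N ω ≤
      (Real.exp a - 1) * expTruncFront a N ω := by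
  have : expTruncFront a N (flipAt ω x) ≤ Real.exp a * expTruncFront a N ω := by
    rw [expTruncFront, expTruncFront, ← Real.exp_add, Real.exp_le_exp]
    linarith [mul_le_mul_of_nonneg_left (abs_truncFront_flipAt_le (N := N) h) ha]
  linarith

lemma eastGen_expTruncFront_le {p : ℝ} (hp0 : 0 ≤ p) (hp1 : p ≤ 1) {a : ℝ} (ha : 0 ≤ a) (N : ℕ)
    (ω : Config) :
    eastGen p (expTruncFront a N) ω ≤ 2 * (Real.exp a - 1) * expTruncFront a N ω := by
  have hc : 0 ≤ (Real.exp a - 1) * expTruncFront a N ω :=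
    mul_nonneg (sub_nonneg.2 (Real.one_le_exp ha)) (Real.exp_pos _).le
  have h_off : ∀ x ∉ ({truncFront N ω, truncFront N ω - 1} : Finset ℤ), ω (x + 1) = false →
      expTruncFront a N (flipAt ω x) = expTruncFront a N ω := fun x hx h => by
    rw [Finset.mem_insert, Finset.mem_singleton, not_or] at hx
    rw [expTruncFront, expTruncFront, truncFront_flipAt_eq h (by omega) (by omega)]
  refine (eastGen_le_card_mul hp0 hp1 hc h_off
    fun x _ => expTruncFront_flipAt_sub_le ha N).trans_eq ?_
  rw [Finset.card_pair (by omega), Nat.cast_ofNat, mul_assoc]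

/-! ### Moments of the front -/

lemma measurableSet_LO : MeasurableSet LO := by
  have : LO = (⋃ y : ℤ, ⋂ x : ℤ, ⋂ _ : x < y, {ω : Config | ω x = true}) ∩
      ⋃ x : ℤ, {ω : Config | ω x = false} := by
    ext ω
    simp [LO]
  have hsite (x : ℤ) (b : Bool) : MeasurableSet {ω : Config | ω x = b} :=
    measurableSet_eq_fun (measurable_pi_apply x) measurable_const
  rw [this]
  exact (MeasurableSet.iUnion fun _ => MeasurableSet.iInter fun x => MeasurableSet.iInter fun _ =>
    hsite x true).inter (MeasurableSet.iUnion fun x => hsite x false)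

lemma integrable_and_integral_le_of_tendsto {α : Type*} [MeasurableSpace α] {ν : Measure α}
    {F : ℕ → α → ℝ} {f : α → ℝ} {C : ℝ} (hF : ∀ n, Integrable (F n) ν) (hF0 : ∀ n, 0 ≤ F n)
    (hC : ∀ᶠ n in atTop, ∫ a, F n a ∂ν ≤ C)
    (hlim : ∀ᵐ a ∂ν, Tendsto (fun n => F n a) atTop (𝓝 (f a))) :
    Integrable f ν ∧ ∫ a, f a ∂ν ≤ C := by
  have hf0 : 0 ≤ᵐ[ν] f := by
    filter_upwards [hlim] with a ha using ge_of_tendsto' ha fun n => hF0 n a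
  have hf : AEStronglyMeasurable f ν :=
    aestronglyMeasurable_of_tendsto_ae _ (fun n => (hF n).1) hlim
  have hC0 : 0 ≤ C := hC.exists.elim fun n hn => (integral_nonneg (hF0 n)).trans hn
  have hfatou : ∫⁻ a, ENNReal.ofReal (f a) ∂ν ≤ ENNReal.ofReal C := calc
    ∫⁻ a, ENNReal.ofReal (f a) ∂ν
      = ∫⁻ a, liminf (fun n => ENNReal.ofReal (F n a)) atTop ∂ν := lintegral_congr_ae <| by
        filter_upwards [hlim] with a ha using (ENNReal.tendsto_ofReal ha).liminf_eq.symm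
    _ ≤ liminf (fun n => ∫⁻ a, ENNReal.ofReal (F n a) ∂ν) atTop :=
      lintegral_liminf_le' fun n => (hF n).aemeasurable.ennreal_ofReal
    _ ≤ ENNReal.ofReal C := liminf_le_of_frequently_le' <| hC.frequently.mono fun n hn => by
      rw [← ofReal_integral_eq_lintegral_ofReal (hF n) (ae_of_all _ (hF0 n))]
      exact ENNReal.ofReal_le_ofReal hn
  refine ⟨(lintegral_ofReal_ne_top_iff_integrable hf hf0).1
    (hfatou.trans_lt ENNReal.ofReal_lt_top).ne, ?_⟩
  rw [integral_eq_lintegral_of_nonneg_ae hf0 hf]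
  exact ENNReal.toReal_le_of_le_ofReal hC0 hfatou

namespace EastProcess

variable (E : EastProcess)

lemma integral_expTruncFront_le {a : ℝ} (ha : 0 < a) {t : ℝ} (ht : 0 ≤ t) (N : ℕ) (ω : Config) :
    ∫ η, expTruncFront a N η ∂E.P t ω ≤
      Real.exp (2 * (Real.exp a - 1) * t) * expTruncFront a N ω :=
  E.integral_le_exp_mul (isCylinder_expTruncFront a N)
    (mul_pos two_pos (sub_pos.2 (Real.one_lt_exp_iff.2 ha)))
    (eastGen_expTruncFront_le E.hp0.le E.hp1.le ha.le N) ht ω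

lemma integrableOn_exp_abs_front_and_setIntegral_le {ω : Config} (hω : ω ∈ LO) {a : ℝ} (ha : 0 < a)
    {t : ℝ} (ht : 0 ≤ t) :
    IntegrableOn (fun η => Real.exp (a * |(front η : ℝ)|)) LO (E.P t ω) ∧
      ∫ η in LO, Real.exp (a * |(front η : ℝ)|) ∂E.P t ω ≤
        Real.exp (2 * (Real.exp a - 1) * t) * Real.exp (a * |(front ω : ℝ)|) := by
  have hint (N : ℕ) := E.integrable_of_isCylinder (isCylinder_expTruncFront a N) t ω
  have hnonneg (N : ℕ) : 0 ≤ expTruncFront a N := fun _ => (Real.exp_pos _).le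
  refine integrable_and_integral_le_of_tendsto (fun N => (hint N).integrableOn) hnonneg ?_ ?_
  · filter_upwards [eventually_truncFront_eq_front hω] with N hN
    rw [← hN]
    exact (setIntegral_le_integral (hint N) (ae_of_all _ (hnonneg N))).trans
      (E.integral_expTruncFront_le ha ht N ω)
  · refine ae_restrict_of_forall_mem measurableSet_LO fun η hη => tendsto_nhds_of_eventually_eq ?_
    filter_upwards [eventually_truncFront_eq_front hη] with N hN
    rw [expTruncFront, hN]

end EastProcess

lemma pow_le_factorial_mul_pow_mul_exp {t x : ℝ} (ht : 0 < t) (hx : 0 ≤ x) (r : ℕ) :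
    x ^ r ≤ r.factorial * t ^ r * Real.exp (t⁻¹ * x) := by
  have h := Real.pow_div_factorial_le_exp (x := t⁻¹ * x) (by positivity) r
  rw [mul_pow, inv_pow] at h
  field_simp at h ⊢
  linarith

lemma exp_inv_sub_one_mul_le {t : ℝ} (ht : 1 ≤ t) : (Real.exp t⁻¹ - 1) * t ≤ 2 := by
  have ht0 : 0 < t := by linarith
  have habs : |t⁻¹| = t⁻¹ := abs_of_pos (inv_pos.2 ht0)
  have h := Real.abs_exp_sub_one_le (x := t⁻¹) (habs.trans_le (inv_le_one_of_one_le₀ ht))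
  rw [habs] at h
  calc (Real.exp t⁻¹ - 1) * t ≤ 2 * t⁻¹ * t := by gcongr; exact (le_abs_self _).trans h
    _ = 2 := by field_simp

theorem front_moment_bounds_general (E : EastProcess) (r : ℕ) {ω : Config} (hω : ω ∈ LO) {t : ℝ}
    (ht : 1 ≤ t) :
    IntegrableOn (fun η => |(front η : ℝ)| ^ r) LO (E.P t ω) ∧
      ∫ η in LO, |(front η : ℝ)| ^ r ∂E.P t ω ≤
        r.factorial * Real.exp (4 + |(front ω : ℝ)| / t) * t ^ r := by
  have ht0 : 0 < t := by linarith
  obtain ⟨hint, hle⟩ := E.integrableOn_exp_abs_front_and_setIntegral_le hω (inv_pos.2 ht0) ht0.le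
  have hpow (η : Config) : |(front η : ℝ)| ^ r ≤
      r.factorial * t ^ r * Real.exp (t⁻¹ * |(front η : ℝ)|) :=
    pow_le_factorial_mul_pow_mul_exp ht0 (abs_nonneg _) r
  have hmeas : AEMeasurable (fun η => |(front η : ℝ)|) ((E.P t ω).restrict LO) :=
    Real.aemeasurable_of_aemeasurable_exp_mul (inv_pos.2 ht0).ne' hint.aemeasurable
  have hint_pow : IntegrableOn (fun η => |(front η : ℝ)| ^ r) LO (E.P t ω) :=
    (hint.const_mul _).mono' (hmeas.pow_const r).aestronglyMeasurable
      (ae_of_all _ fun η => by simpa using hpow η)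
  refine ⟨hint_pow, ?_⟩
  calc ∫ η in LO, |(front η : ℝ)| ^ r ∂E.P t ω
      ≤ ∫ η in LO, r.factorial * t ^ r * Real.exp (t⁻¹ * |(front η : ℝ)|) ∂E.P t ω :=
        integral_mono hint_pow (hint.const_mul _) hpow
    _ = r.factorial * t ^ r * ∫ η in LO, Real.exp (t⁻¹ * |(front η : ℝ)|) ∂E.P t ω :=
        integral_const_mul _ _
    _ ≤ r.factorial * t ^ r * (Real.exp 4 * Real.exp (t⁻¹ * |(front ω : ℝ)|)) := by
        gcongr
        refine hle.trans ?_
        gcongr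
        linarith [exp_inv_sub_one_mul_le ht]
    _ = r.factorial * Real.exp (4 + |(front ω : ℝ)| / t) * t ^ r := by
        rw [← Real.exp_add, div_eq_inv_mul]
        ring

/-- **Moment bounds for the front** (Lemma 3.4 of the paper): for every `r ≥ 1` there is a
constant `K < ∞` depending only on `r` such that for every East process, every `ω ∈ LO₀` and
every `t ≥ 1`, `E_ω[|X(ω(t))|^r] ≤ K t^r`. -/
theorem front_moment_bounds :
    ∀ r : ℕ, 1 ≤ r → ∃ K : ℝ,
      ∀ E : EastProcess, 0 < gap E →
        ∀ ω ∈ LO₀, ∀ t : ℝ, 1 ≤ t →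
          (∫ η in LO, |(front η : ℝ)| ^ r ∂(E.P t ω)) ≤ K * t ^ r := by
  intro r _
  refine ⟨r.factorial * Real.exp 4, fun E _ ω hω t ht => ?_⟩
  simpa [hω.2] using (front_moment_bounds_general E r hω.1 ht).2

end
end

section
/- Let 1 ≤ x₊ ≤ x₋ be integers and let f be a cylinder function on Ω depending only on the coordinates in ⟦−x₋, −x₊⟧ with μ(f) = 0. Then for every ω ∈ LO_0 and all 0 ≤ s ≤ t: | ∫ P_{t−s}(ω, dη) ∫ P_s(η, dξ) f(ξ_{X(η)+·}) | ≤ Var_μ(f)^{1/2} · (1/min(p,q))^{x₋} · e^{−s·gap}, where ξ_{X(η)+·} denotes the configuration ξ translated so that its value at site y is ξ_{X(η)+y}, and the outer integral runs over η ∈ LO. (Relaxation at time t in a window centered at the position of the front at the intermediate time t−s.) -/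
open MeasureTheory ProbabilityTheory Filter Topology

noncomputable section

/-!
An empty site shields what lies to its left. Put a zero at `z₀` and let `f` have mean zero and be
supported in the block `[a, z₀)`. Over a block `[a, z)` with `z` empty, the generator with frozen
boundary has at least the spectral gap of the full process, so it contracts second moments at rate
`2 gap`; the zero may be filled, but only when `z + 1` is empty, and then `[a, z + 1)` is again a
block of the same kind. Hence the supremum, over all `z ≥ z₀` and all configurations empty at `z`,
of the second moment of `P_t f` over `[a, z)` decays like `e^{-2 t gap}`. Since `ω` has probability
at least `min(p, q) ^ n` on a block of `n` sites, this bounds `P_t f` at every `ω` that is empty at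
`z₀`. After translation the front is such a zero, whatever the law of the configuration at time
`t - s`.

The contraction is proved for an Euler scheme, on which blocks and supports can be followed step by
step. The scheme converges to the semigroup although the generator is only known pointwise on
cylinder functions: the maximum principle identifies `g` with the resolvent of `g - 𝓛 g`, which
gives Kolmogorov's equation for `P_t g`, and the truncation of the line costs only a factor
`t ^ r / r!` because influence has to cross `r` sites.
-/

/-! ### Feller semigroups on compact spaces -/

section FellerSemigroup

variable {X : Type*} [TopologicalSpace X] [MeasurableSpace X]

/-- A Feller semigroup of Markov kernels whose orbits `t ↦ P_t g x` are continuous. As in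
`EastProcess`, time is a real number and only the values at nonnegative times matter. -/
structure IsFellerSemigroup (P : ℝ → Kernel X X) : Prop where
  isMarkovKernel : ∀ t, IsMarkovKernel (P t)
  zero : P 0 = Kernel.id
  add : ∀ s t, 0 ≤ s → 0 ≤ t → P (t + s) = (P s).comp (P t)
  continuous : ∀ t, 0 ≤ t → ∀ g : X → ℝ, Continuous g → Continuous fun x => ∫ y, g y ∂P t x
  continuous_time : ∀ g : X → ℝ, Continuous g → ∀ x, Continuous fun t => ∫ y, g y ∂P t x

/-- The action `P_t g` of a family of kernels on functions. -/
def evolve (P : ℝ → Kernel X X) (t : ℝ) (g : X → ℝ) (x : X) : ℝ := ∫ y, g y ∂P t x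

/-- The resolvent `∫₀^∞ e^{-s} P_s φ ds` of the semigroup `P` at `1`. -/
def fellerResolvent (P : ℝ → Kernel X X) (φ : X → ℝ) (x : X) : ℝ :=
  ∫ s in Set.Ioi (0 : ℝ), Real.exp (-s) * evolve P s φ x

/-- `ℓ` is the pointwise generator of `P` at `g`: the right derivative of `t ↦ P_t g x` at `0` is
`ℓ x` for every `x`, with no uniformity in `x`. -/
def HasGenerator (P : ℝ → Kernel X X) (g ℓ : X → ℝ) : Prop :=
  ∀ x, HasDerivWithinAt (fun t => evolve P t g x) (ℓ x) (Set.Ici 0) 0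

lemma integrable_of_continuous [CompactSpace X] [OpensMeasurableSpace X] {g : X → ℝ}
    (hg : Continuous g) (ν : Measure X) [IsFiniteMeasure ν] : Integrable g ν :=
  hg.integrable_of_hasCompactSupport (.of_compactSpace g)

lemma abs_exp_neg_mul_le {a B : ℝ} (h : |a| ≤ B) (s : ℝ) :
    ‖Real.exp (-s) * a‖ ≤ Real.exp (-s) * B := by
  rw [norm_mul, Real.norm_eq_abs, Real.norm_eq_abs, Real.abs_exp]
  gcongr

lemma hasDerivAt_exp_mul_sub_integral {u : ℝ → ℝ} (hu : Continuous u) (c t : ℝ) :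
    HasDerivAt (fun t => Real.exp t * (c - ∫ r in (0 : ℝ)..t, Real.exp (-r) * u r))
      (Real.exp t * (c - ∫ r in (0 : ℝ)..t, Real.exp (-r) * u r) - u t) t := by
  have hint : HasDerivAt (fun t => ∫ r in (0 : ℝ)..t, Real.exp (-r) * u r)
      (Real.exp (-t) * u t) t :=
    (Continuous.integral_hasStrictDerivAt (by fun_prop) 0 t).hasDerivAt
  refine ((Real.hasDerivAt_exp t).mul (hint.const_sub c)).congr_deriv ?_
  have hexp : Real.exp t * Real.exp (-t) = 1 := by rw [← Real.exp_add]; simp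
  linear_combination -u t * hexp

lemma integral_Ioi_add_right (F : ℝ → ℝ) (h : ℝ) :
    ∫ s in Set.Ioi (0 : ℝ), F (s + h) = ∫ r in Set.Ioi h, F r := by
  simpa [Set.preimage_add_const_Ioi] using
    (measurePreserving_add_right volume h).setIntegral_preimage_emb
      (measurableEmbedding_addRight h) F (Set.Ioi h)

namespace IsFellerSemigroup

variable {P : ℝ → Kernel X X} {g φ ℓ ℓ' : X → ℝ}

lemma evolve_zero (hP : IsFellerSemigroup P) (hg : Measurable g) (x : X) :
    evolve P 0 g x = g x := by
  simp [evolve, hP.zero, Kernel.id_apply, integral_dirac' _ _ hg.stronglyMeasurable]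

lemma abs_evolve_le (hP : IsFellerSemigroup P) {B : ℝ} (hB : ∀ x, |g x| ≤ B) (t : ℝ) (x : X) :
    |evolve P t g x| ≤ B := by
  have := hP.isMarkovKernel t
  simpa [evolve] using norm_integral_le_of_norm_le_const (μ := P t x) (f := g) (ae_of_all _ hB)

lemma continuous_evolve (hP : IsFellerSemigroup P) (hg : Continuous g) {t : ℝ} (ht : 0 ≤ t) :
    Continuous (evolve P t g) :=
  hP.continuous t ht g hg

variable [CompactSpace X]

lemma integrableOn_exp_neg_mul_evolve (hP : IsFellerSemigroup P) (hφ : Continuous φ) (x : X)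
    (c : ℝ) : IntegrableOn (fun s => Real.exp (-s) * evolve P s φ x) (Set.Ioi c) := by
  obtain ⟨B, hB⟩ := isCompact_univ.exists_bound_of_continuousOn hφ.continuousOn
  refine Integrable.mono' ((integrableOn_exp_neg_Ioi c).mul_const B) ?_ (ae_of_all _ fun s =>
    abs_exp_neg_mul_le (hP.abs_evolve_le (fun y => hB y trivial) s x) s)
  have := hP.continuous_time φ hφ x
  exact (Continuous.mul (by fun_prop) this).aestronglyMeasurable

lemma continuous_fellerResolvent [FirstCountableTopology X] (hP : IsFellerSemigroup P)
    (hφ : Continuous φ) : Continuous (fellerResolvent P φ) := by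
  obtain ⟨B, hB⟩ := isCompact_univ.exists_bound_of_continuousOn hφ.continuousOn
  refine continuous_of_dominated (bound := fun s => Real.exp (-s) * B)
    (fun x => (hP.integrableOn_exp_neg_mul_evolve hφ x 0).1)
    (fun x => ae_of_all _ fun s =>
      abs_exp_neg_mul_le (hP.abs_evolve_le (fun y => hB y trivial) s x) s)
    ((integrableOn_exp_neg_Ioi 0).mul_const B) ?_
  filter_upwards [ae_restrict_mem measurableSet_Ioi] with s hs
  exact (hP.continuous_evolve hφ (le_of_lt hs)).const_mul _

variable [OpensMeasurableSpace X]

lemma evolve_sub (hP : IsFellerSemigroup P) (hg : Continuous g) (hφ : Continuous φ) (t : ℝ)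
    (x : X) : evolve P t (g - φ) x = evolve P t g x - evolve P t φ x := by
  have := hP.isMarkovKernel t
  exact integral_sub (integrable_of_continuous hg _) (integrable_of_continuous hφ _)

lemma evolve_add (hP : IsFellerSemigroup P) (hg : Continuous g) {s t : ℝ} (hs : 0 ≤ s)
    (ht : 0 ≤ t) (x : X) : evolve P (t + s) g x = evolve P t (evolve P s g) x := by
  have := hP.isMarkovKernel t
  have := hP.isMarkovKernel s
  unfold evolve
  rw [hP.add s t hs ht]
  exact Kernel.integral_comp (integrable_of_continuous hg _)

lemma integrable_prod_exp_neg_mul_evolve (hP : IsFellerSemigroup P) (hφ : Continuous φ)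
    (ν : Measure X) [IsFiniteMeasure ν] :
    Integrable (Function.uncurry fun (s : ℝ) (y : X) => Real.exp (-s) * evolve P (max s 0) φ y)
      ((volume.restrict (Set.Ioi (0 : ℝ))).prod ν) := by
  obtain ⟨B, hB⟩ := isCompact_univ.exists_bound_of_continuousOn hφ.continuousOn
  have hbound : Integrable (fun z : ℝ × X => Real.exp (-z.1) * B)
      ((volume.restrict (Set.Ioi (0 : ℝ))).prod ν) :=
    Integrable.mul_prod (integrableOn_exp_neg_Ioi 0) (integrable_const B)
  refine hbound.mono' (StronglyMeasurable.aestronglyMeasurable ?_) (ae_of_all _ fun z =>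
    abs_exp_neg_mul_le (hP.abs_evolve_le (fun y => hB y trivial) _ z.2) z.1)
  refine stronglyMeasurable_uncurry_of_continuous_of_stronglyMeasurable (fun y => ?_) fun s => ?_
  · have := hP.continuous_time φ hφ y
    exact Continuous.mul (by fun_prop) (this.comp (by fun_prop))
  · exact ((hP.continuous_evolve hφ (le_max_right s 0)).const_mul _).stronglyMeasurable

lemma evolve_fellerResolvent_eq_integral (hP : IsFellerSemigroup P) (hφ : Continuous φ) {h : ℝ}
    (hh : 0 ≤ h) (x : X) : evolve P h (fellerResolvent P φ) x =
      ∫ s in Set.Ioi (0 : ℝ), Real.exp (-s) * evolve P (s + h) φ x := by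
  have := hP.isMarkovKernel h
  have hmax (y : X) : ∫ s in Set.Ioi (0 : ℝ), Real.exp (-s) * evolve P (max s 0) φ y =
      fellerResolvent P φ y :=
    setIntegral_congr_fun measurableSet_Ioi fun s (hs : 0 < s) => by simp only [max_eq_left hs.le]
  have hswap := integral_integral_swap (hP.integrable_prod_exp_neg_mul_evolve hφ (P h x))
  simp only [hmax] at hswap
  refine hswap.symm.trans (setIntegral_congr_fun measurableSet_Ioi
    fun s (hs : 0 < s) => ?_)
  simp only [max_eq_left hs.le]
  rw [integral_const_mul, add_comm, hP.evolve_add hφ hs.le hh]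
  rfl

lemma evolve_fellerResolvent (hP : IsFellerSemigroup P) (hφ : Continuous φ) {h : ℝ}
    (hh : 0 ≤ h) (x : X) : evolve P h (fellerResolvent P φ) x =
      Real.exp h * (fellerResolvent P φ x - ∫ r in (0 : ℝ)..h, Real.exp (-r) * evolve P r φ x) := by
  have hsplit := intervalIntegral.integral_interval_add_Ioi
    (hP.integrableOn_exp_neg_mul_evolve hφ x 0) (hP.integrableOn_exp_neg_mul_evolve hφ x h)
  calc evolve P h (fellerResolvent P φ) x
      = ∫ s in Set.Ioi (0 : ℝ), Real.exp h * (Real.exp (-(s + h)) * evolve P (s + h) φ x) := by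
        rw [hP.evolve_fellerResolvent_eq_integral hφ hh]
        refine integral_congr_ae (ae_of_all _ fun s => ?_)
        simp only [← mul_assoc, ← Real.exp_add]
        congr 2
        ring
    _ = Real.exp h * ∫ r in Set.Ioi h, Real.exp (-r) * evolve P r φ x := by
        rw [integral_const_mul, integral_Ioi_add_right fun r => Real.exp (-r) * evolve P r φ x]
    _ = _ := by rw [fellerResolvent, ← hsplit]; ring

lemma hasGenerator_fellerResolvent (hP : IsFellerSemigroup P) (hφ : Continuous φ) :
    HasGenerator P (fellerResolvent P φ) (fellerResolvent P φ - φ) := fun x => by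
  have hderiv := hasDerivAt_exp_mul_sub_integral (hP.continuous_time φ hφ x)
    (fellerResolvent P φ x) 0
  refine (hderiv.hasDerivWithinAt.congr (fun h hh => hP.evolve_fellerResolvent hφ hh x)
    (hP.evolve_fellerResolvent hφ le_rfl x)).congr_deriv ?_
  simpa [evolve] using hP.evolve_zero hφ.measurable x

lemma hasGenerator_sub (hP : IsFellerSemigroup P) (hg : Continuous g) (hφ : Continuous φ)
    (hgℓ : HasGenerator P g ℓ) (hφℓ : HasGenerator P φ ℓ') : HasGenerator P (g - φ) (ℓ - ℓ') :=
  fun x => ((hgℓ x).sub (hφℓ x)).congr (fun t _ => hP.evolve_sub hg hφ t x)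
    (hP.evolve_sub hg hφ 0 x)

lemma nonpos_of_hasGenerator_self (hP : IsFellerSemigroup P) (hg : Continuous g)
    (hgen : HasGenerator P g g) (x : X) : g x ≤ 0 := by
  obtain ⟨x₀, -, hmax⟩ := isCompact_univ.exists_isMaxOn ⟨x, Set.mem_univ x⟩ hg.continuousOn
  have hle (y : X) : g y ≤ g x₀ := hmax (Set.mem_univ y)
  have hslope := (hasDerivWithinAt_iff_tendsto_slope' (Set.self_notMem_Ioi)).1
    (hasDerivWithinAt_Ioi_iff_Ici.2 (hgen x₀))
  refine (hle x).trans (le_of_tendsto hslope ?_)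
  filter_upwards [self_mem_nhdsWithin] with t ht
  have := hP.isMarkovKernel t
  have hevolve : evolve P t g x₀ ≤ g x₀ := by
    simpa [evolve] using
      integral_mono (integrable_of_continuous hg (P t x₀)) (integrable_const _) hle
  rw [slope_def_field, hP.evolve_zero hg.measurable]
  exact div_nonpos_of_nonpos_of_nonneg (by linarith) (by simpa using le_of_lt ht)

lemma abs_evolve_nat_mul_sub_le (hP : IsFellerSemigroup P) {g : ℕ → X → ℝ}
    (hg : ∀ j, Continuous (g j)) {δ ε : ℝ} (hδ : 0 ≤ δ) {N : ℕ}
    (hstep : ∀ j < N, ∀ x, |evolve P δ (g j) x - g (j + 1) x| ≤ ε) (x : X) :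
    |evolve P (N * δ) (g 0) x - g N x| ≤ N * ε := by
  induction N generalizing x with
  | zero => simp [hP.evolve_zero (hg 0).measurable]
  | succ N ih =>
    have hNδ : 0 ≤ N * δ := by positivity
    have hadd : evolve P ((N + 1 : ℕ) * δ) (g 0) x = evolve P δ (evolve P (N * δ) (g 0)) x := by
      rw [← hP.evolve_add (hg 0) hNδ hδ, Nat.cast_succ, add_one_mul, add_comm]
    have herror := hP.abs_evolve_le (g := evolve P (N * δ) (g 0) - g N)
      (ih fun j hj => hstep j (hj.trans N.lt_succ_self)) δ x
    rw [hP.evolve_sub (hP.continuous_evolve (hg 0) hNδ) (hg N)] at herror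
    calc _ ≤ |evolve P δ (evolve P (N * δ) (g 0)) x - evolve P δ (g N) x| +
          |evolve P δ (g N) x - g (N + 1) x| := hadd ▸ abs_sub_le _ _ _
      _ ≤ N * ε + ε := add_le_add herror (hstep N N.lt_succ_self x)
      _ = _ := by push_cast; ring

variable [FirstCountableTopology X]

lemma fellerResolvent_sub_generator (hP : IsFellerSemigroup P) (hg : Continuous g)
    (hℓ : Continuous ℓ) (hgen : HasGenerator P g ℓ) : fellerResolvent P (g - ℓ) = g := by
  have hφ : Continuous (g - ℓ) := hg.sub hℓ
  have hR := hP.continuous_fellerResolvent hφ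
  have hRgen := hP.hasGenerator_fellerResolvent hφ
  funext x
  refine le_antisymm (sub_nonpos.1 ?_) (sub_nonpos.1 ?_)
  · refine hP.nonpos_of_hasGenerator_self (hR.sub hg) ?_ x
    convert hP.hasGenerator_sub hR hg hRgen hgen using 1
    abel
  · refine hP.nonpos_of_hasGenerator_self (hg.sub hR) ?_ x
    convert hP.hasGenerator_sub hg hR hgen hRgen using 1
    abel

lemma hasDerivWithinAt_evolve (hP : IsFellerSemigroup P) (hg : Continuous g) (hℓ : Continuous ℓ)
    (hgen : HasGenerator P g ℓ) {t : ℝ} (ht : 0 ≤ t) (x : X) :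
    HasDerivWithinAt (fun t => evolve P t g x) (evolve P t ℓ x) (Set.Ici 0) t := by
  have hφ : Continuous (g - ℓ) := hg.sub hℓ
  have hformula {s : ℝ} (hs : 0 ≤ s) := hP.evolve_fellerResolvent hφ hs x
  rw [hP.fellerResolvent_sub_generator hg hℓ hgen] at hformula
  have hderiv := hasDerivAt_exp_mul_sub_integral (hP.continuous_time _ hφ x) (g x) t
  refine (hderiv.hasDerivWithinAt.congr (fun s hs => hformula hs) (hformula ht)).congr_deriv ?_
  calc _ = evolve P t g x - evolve P t (g - ℓ) x := by rw [hformula ht]; rfl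
    _ = _ := by rw [hP.evolve_sub hg hℓ]; ring

lemma abs_evolve_sub_le (hP : IsFellerSemigroup P) (hg : Continuous g) (hℓ : Continuous ℓ)
    (hgen : HasGenerator P g ℓ) {C : ℝ} (hC : ∀ x, |ℓ x| ≤ C) {t : ℝ} (ht : 0 ≤ t) (x : X) :
    |evolve P t g x - g x| ≤ C * t := by
  simpa [hP.evolve_zero hg.measurable] using norm_image_sub_le_of_norm_deriv_le_segment'
    (fun s hs => (hP.hasDerivWithinAt_evolve hg hℓ hgen hs.1 x).mono fun _ hr => hr.1)
    (fun s _ => hP.abs_evolve_le hC s x) t ⟨ht, le_rfl⟩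

lemma abs_evolve_sub_taylor_le (hP : IsFellerSemigroup P) (hg : Continuous g) (hℓ : Continuous ℓ)
    (hℓ' : Continuous ℓ') (hgen : HasGenerator P g ℓ) (hgen' : HasGenerator P ℓ ℓ') {C : ℝ}
    (hC : ∀ x, |ℓ' x| ≤ C) {t : ℝ} (ht : 0 ≤ t) (x : X) :
    |evolve P t g x - (g x + t * ℓ x)| ≤ C * t ^ 2 := by
  have hC0 : 0 ≤ C := (abs_nonneg _).trans (hC x)
  have hderiv (s : ℝ) (hs : s ∈ Set.Ico 0 t) : |evolve P s ℓ x - 1 * ℓ x| ≤ C * t := by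
    rw [one_mul]
    exact (hP.abs_evolve_sub_le hℓ hℓ' hgen' hC hs.1 x).trans (by gcongr; exact hs.2.le)
  have := norm_image_sub_le_of_norm_deriv_le_segment'
    (f := fun s => evolve P s g x - s * ℓ x)
    (fun s hs => ((hP.hasDerivWithinAt_evolve hg hℓ hgen hs.1 x).mono fun _ hr => hr.1).sub
      ((hasDerivWithinAt_id s _).mul_const (ℓ x))) hderiv t ⟨ht, le_rfl⟩
  rw [hP.evolve_zero hg.measurable, Real.norm_eq_abs] at this
  calc _ = |evolve P t g x - t * ℓ x - (g x - 0 * ℓ x)| := by congr 1; ring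
    _ ≤ C * t * (t - 0) := this
    _ = _ := by ring

end IsFellerSemigroup

end FellerSemigroup

/-! ### Local operators on continuous functions -/

section LocalOperators

namespace DependsOnF

lemma mono {f : Config → ℝ} {S T : Set ℤ} (hf : DependsOnF f S) (hST : S ⊆ T) : DependsOnF f T :=
  fun ω ω' h => hf ω ω' fun x hx => h x (hST hx)

lemma apply_update {f : Config → ℝ} {S : Set ℤ} (hf : DependsOnF f S) {x : ℤ} (hx : x ∉ S)
    (ω : Config) (b : Bool) : f (Function.update ω x b) = f ω :=
  hf _ _ fun _ hy => Function.update_of_ne (ne_of_mem_of_not_mem hy hx) b ω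

lemma continuous {f : Config → ℝ} {S : Finset ℤ} (hf : DependsOnF f S) : Continuous f := by
  refine (IsLocallyConstant.iff_eventually_eq f |>.2 fun ω => ?_).continuous
  have hnhds : ∀ᶠ ω' in 𝓝 ω, ∀ x ∈ S, ω' x = ω x := by
    rw [Filter.eventually_all_finset]
    exact fun x _ => (continuous_apply x).continuousAt ((isOpen_discrete {ω x}).mem_nhds rfl)
  filter_upwards [hnhds] with ω' h using hf ω' ω h

end DependsOnF

variable {p : ℝ} {x y : ℤ} {F c : C(Config, ℝ)} {S : Set ℤ} {Λ : Finset ℤ}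

/-- The operator `F ↦ (ω ↦ F (ω with the value b at x))`. -/
def atSite (x : ℤ) (b : Bool) : C(Config, ℝ) →ₗ[ℝ] C(Config, ℝ) :=
  (ContinuousMap.compRightAlgHom ℝ ℝ
    ⟨fun ω : Config => Function.update ω x b, by fun_prop⟩).toLinearMap

/-- The average over the value at the site `x`, which is `true` with probability `p`. -/
def siteAvg (p : ℝ) (x : ℤ) : C(Config, ℝ) →ₗ[ℝ] C(Config, ℝ) :=
  p • atSite x true + (1 - p) • atSite x false

/-- The discrete gradient at the site `x`. -/
def siteDiff (x : ℤ) : C(Config, ℝ) →ₗ[ℝ] C(Config, ℝ) := atSite x true - atSite x false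

/-- The East constraint at the site `x`, which may only be updated when `x + 1` is empty. -/
def constraint (x : ℤ) : C(Config, ℝ) where
  toFun ω := if ω (x + 1) = false then 1 else 0
  continuous_toFun :=
    (continuous_of_discreteTopology (f := fun b : Bool => if b = false then (1 : ℝ) else 0)).comp
      (continuous_apply (x + 1))

/-- The East generator in heat-bath form, with updates only at the sites of `Λ`. -/
def localGen (p : ℝ) (Λ : Finset ℤ) : C(Config, ℝ) →ₗ[ℝ] C(Config, ℝ) :=
  ∑ x ∈ Λ, LinearMap.mulLeft ℝ (constraint x) ∘ₗ (siteAvg p x - LinearMap.id)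

/-- The explicit Euler step of length `δ` for `localGen p Λ`; its powers approximate the
semigroup. -/
def eulerStep (p : ℝ) (Λ : Finset ℤ) (δ : ℝ) : Module.End ℝ C(Config, ℝ) :=
  1 + δ • localGen p Λ

lemma siteAvg_apply (F : C(Config, ℝ)) (ω : Config) : siteAvg p x F ω =
    p * F (Function.update ω x true) + (1 - p) * F (Function.update ω x false) :=
  rfl

lemma siteDiff_apply (F : C(Config, ℝ)) (ω : Config) : siteDiff x F ω =
    F (Function.update ω x true) - F (Function.update ω x false) :=
  rfl

lemma localGen_eq_sum (F : C(Config, ℝ)) :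
    localGen p Λ F = ∑ x ∈ Λ, constraint x * (siteAvg p x F - F) := by
  simp [localGen]

lemma localGen_apply (F : C(Config, ℝ)) (ω : Config) : localGen p Λ F ω =
    ∑ x ∈ Λ, constraint x ω * (siteAvg p x F ω - F ω) := by
  simp [localGen_eq_sum]

lemma eulerStep_apply (δ : ℝ) (F : C(Config, ℝ)) : eulerStep p Λ δ F = F + δ • localGen p Λ F :=
  rfl

lemma constraint_nonneg (x : ℤ) (ω : Config) : 0 ≤ constraint x ω := by
  change (0 : ℝ) ≤ ite _ _ _
  split_ifs <;> norm_num

lemma constraint_le_one (x : ℤ) (ω : Config) : constraint x ω ≤ 1 := by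
  change ite _ _ _ ≤ (1 : ℝ)
  split_ifs <;> norm_num

lemma dependsOnF_constraint (x : ℤ) : DependsOnF (constraint x) {x + 1} := fun ω ω' h => by
  change ite _ _ _ = ite _ _ _
  rw [h (x + 1) rfl]

lemma DependsOnF.siteAvg (hF : DependsOnF F S) (p : ℝ) (x : ℤ) : DependsOnF (siteAvg p x F) S := by
  intro ω ω' h
  have hupdate (b : Bool) : F (Function.update ω x b) = F (Function.update ω' x b) :=
    hF _ _ fun y hy => by by_cases hyx : y = x <;> simp [hyx, h y hy]
  rw [siteAvg_apply, siteAvg_apply, hupdate, hupdate]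

lemma DependsOnF.localGen (hF : DependsOnF F S) (hΛ : ∀ x ∈ Λ, x + 1 ∈ S) (p : ℝ) :
    DependsOnF (localGen p Λ F) S := by
  intro ω ω' h
  rw [localGen_apply, localGen_apply]
  refine Finset.sum_congr rfl fun x hx => ?_
  rw [hF ω ω' h, hF.siteAvg p x ω ω' h,
    (dependsOnF_constraint x).mono (Set.singleton_subset_iff.2 (hΛ x hx)) ω ω' h]

lemma DependsOnF.eulerStep (hF : DependsOnF F S) (hΛ : ∀ x ∈ Λ, x + 1 ∈ S) (p δ : ℝ) :
    DependsOnF (eulerStep p Λ δ F) S := fun ω ω' h => by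
  simp only [eulerStep_apply, ContinuousMap.add_apply, ContinuousMap.smul_apply, hF ω ω' h,
    hF.localGen hΛ p ω ω' h]

lemma DependsOnF.eulerStep_pow (hF : DependsOnF F S) (hΛ : ∀ x ∈ Λ, x + 1 ∈ S) (p δ : ℝ) (j : ℕ) :
    DependsOnF ((_root_.eulerStep p Λ δ ^ j) F) S := by
  induction j with
  | zero => exact hF
  | succ j ih => rw [pow_succ']; exact ih.eulerStep hΛ p δ

lemma siteAvg_of_dependsOnF (hF : DependsOnF F S) (hx : x ∉ S) (p : ℝ) : siteAvg p x F = F := by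
  ext ω
  rw [siteAvg_apply, hF.apply_update hx, hF.apply_update hx]
  ring

lemma siteDiff_of_dependsOnF (hF : DependsOnF F S) (hx : x ∉ S) : siteDiff x F = 0 := by
  ext ω
  simp [siteDiff_apply, hF.apply_update hx]

lemma siteAvg_mul (hc : DependsOnF c S) (hx : x ∉ S) (F : C(Config, ℝ)) :
    siteAvg p x (c * F) = c * siteAvg p x F := by
  ext ω
  simp only [siteAvg_apply, ContinuousMap.mul_apply, hc.apply_update hx]
  ring

lemma siteDiff_mul (hc : DependsOnF c S) (hx : x ∉ S) (F : C(Config, ℝ)) :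
    siteDiff x (c * F) = c * siteDiff x F := by
  ext ω
  simp only [siteDiff_apply, ContinuousMap.mul_apply, hc.apply_update hx]
  ring

lemma dependsOnF_siteAvg_compl (F : C(Config, ℝ)) : DependsOnF (siteAvg p x F) {x}ᶜ := by
  intro ω ω' h
  have hupdate (b : Bool) : Function.update ω x b = Function.update ω' x b :=
    funext fun y => by by_cases hyx : y = x <;> simp [hyx, h y]
  rw [siteAvg_apply, siteAvg_apply, hupdate, hupdate]

lemma siteDiff_siteAvg (F : C(Config, ℝ)) (hxy : x ≠ y) :
    siteDiff x (siteAvg p y F) = siteAvg p y (siteDiff x F) := by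
  ext ω
  simp only [siteDiff_apply, siteAvg_apply, Function.update_comm hxy]
  ring

lemma abs_siteAvg_le (hp : p ∈ Set.Icc 0 1) {B : ℝ} (hF : ∀ ω, |F ω| ≤ B) (ω : Config) :
    |siteAvg p x F ω| ≤ B := by
  rw [siteAvg_apply, abs_le]
  obtain ⟨hp0, hp1⟩ := hp
  constructor <;>
    nlinarith [abs_le.1 (hF (Function.update ω x true)), abs_le.1 (hF (Function.update ω x false))]

lemma siteAvg_sub_self (F : C(Config, ℝ)) (ω : Config) :
    siteAvg p x F ω - F ω = (p - if ω x = true then 1 else 0) * siteDiff x F ω := by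
  have hself : F ω = F (Function.update ω x (ω x)) := by rw [Function.update_eq_self]
  rw [siteAvg_apply, siteDiff_apply]
  cases h : ω x <;> rw [hself, h] <;> simp only [Bool.false_eq_true, if_false, if_true] <;> ring

lemma abs_siteAvg_sub_self_le (hp : p ∈ Set.Icc 0 1) (F : C(Config, ℝ)) (ω : Config) :
    |siteAvg p x F ω - F ω| ≤ |siteDiff x F ω| := by
  rw [siteAvg_sub_self, abs_mul]
  refine mul_le_of_le_one_left (abs_nonneg _) (abs_le.2 ?_)
  obtain ⟨hp0, hp1⟩ := hp
  split_ifs <;> constructor <;> linarith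

lemma norm_localGen_le (hp : p ∈ Set.Icc 0 1) (Λ : Finset ℤ) (F : C(Config, ℝ)) :
    ‖localGen p Λ F‖ ≤ 2 * Λ.card * ‖F‖ := by
  refine (ContinuousMap.norm_le _ (by positivity)).2 fun ω => ?_
  rw [localGen_apply, Real.norm_eq_abs]
  have hterm (x : ℤ) : |constraint x ω * (siteAvg p x F ω - F ω)| ≤ 2 * ‖F‖ := by
    rw [abs_mul, abs_of_nonneg (constraint_nonneg x ω)]
    refine (mul_le_of_le_one_left (abs_nonneg _) (constraint_le_one x ω)).trans ?_
    refine (abs_sub _ _).trans ?_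
    linarith [abs_siteAvg_le (x := x) hp F.norm_coe_le_norm ω, F.norm_coe_le_norm ω,
      Real.norm_eq_abs (F ω)]
  calc _ ≤ ∑ x ∈ Λ, |constraint x ω * (siteAvg p x F ω - F ω)| := Finset.abs_sum_le_sum_abs _ _
    _ ≤ ∑ _x ∈ Λ, 2 * ‖F‖ := Finset.sum_le_sum fun x _ => hterm x
    _ = _ := by rw [Finset.sum_const, nsmul_eq_mul]; ring

lemma eastGen_eq_localGen (hF : DependsOnF F Λ) (p : ℝ) : eastGen p F = localGen p Λ F := by
  have hflip (x : ℤ) (ω : Config) : (if ω x = false then p else 1 - p) * (F (flipAt ω x) - F ω) =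
      siteAvg p x F ω - F ω := by
    have hflipAt : flipAt ω x = Function.update ω x (!ω x) :=
      funext fun y => by simp [flipAt, Function.update_apply]
    have hself : F ω = F (Function.update ω x (ω x)) := by rw [Function.update_eq_self]
    rw [siteAvg_apply, hflipAt]
    cases h : ω x <;> rw [hself, h] <;>
      simp only [Bool.true_eq_false, if_false, if_true, Bool.not_true, Bool.not_false] <;> ring
  funext ω
  rw [eastGen, localGen_apply, tsum_eq_sum (s := Λ)]
  · exact Finset.sum_congr rfl fun x _ => by rw [mul_assoc, hflip]; rfl
  · intro x hx
    rw [mul_assoc, hflip, siteAvg_of_dependsOnF hF (mod_cast hx), sub_self, mul_zero]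

end LocalOperators

/-! ### Block averages and the spectral gap with frozen boundary conditions -/

section BlockAverages

instance (E : EastProcess) : IsProbabilityMeasure E.μ := E.μprob

lemma EastProcess.p_mem_Icc (E : EastProcess) : E.p ∈ Set.Icc 0 1 := ⟨E.hp0.le, E.hp1.le⟩

lemma measure_ext_of_cylinder {μ ν : Measure Config} [IsFiniteMeasure μ] [IsFiniteMeasure ν]
    (h : ∀ (S : Finset ℤ) (σ : Config),
      μ {ω | ∀ x ∈ S, ω x = σ x} = ν {ω | ∀ x ∈ S, ω x = σ x}) : μ = ν := by
  refine IsProjectiveLimit.unique (P := fun S => ν.map S.restrict) (fun S => ?_) fun S => rfl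
  refine Measure.ext_of_singleton fun τ : S → Bool => ?_
  have hcyl : S.restrict (π := fun _ : ℤ => Bool) ⁻¹' {τ} =
      {ω : Config | ∀ x ∈ S, ω x = if hx : x ∈ S then τ ⟨x, hx⟩ else true} := by
    ext ω
    simp only [Set.mem_preimage, Set.mem_singleton_iff, funext_iff, Set.mem_ofPred_eq]
    exact ⟨fun h x hx => by simp [hx, ← h ⟨x, hx⟩], fun h x => by simpa using h x x.2⟩
  have hmeas : Measurable (S.restrict (π := fun _ : ℤ => Bool)) := Finset.measurable_restrict S
  rw [Measure.map_apply hmeas (measurableSet_singleton τ),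
    Measure.map_apply hmeas (measurableSet_singleton τ), hcyl, h]

variable {E : EastProcess} {S : Finset ℤ} {T : Set ℤ} {x : ℤ} {F c : C(Config, ℝ)} {ω : Config}

lemma measure_preimage_update_cylinder (E : EastProcess) (S : Finset ℤ) (σ : Config) (x : ℤ)
    (b : Bool) : E.μ ((fun ω : Config => Function.update ω x b) ⁻¹' {ω | ∀ y ∈ S, ω y = σ y}) =
      if x ∈ S → σ x = b then ∏ y ∈ S.erase x, ENNReal.ofReal (if σ y then E.p else 1 - E.p)
      else 0 := by
  rw [← E.μprod]
  have hpre : (fun ω : Config => Function.update ω x b) ⁻¹' {ω | ∀ y ∈ S, ω y = σ y} =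
      {ω | (x ∈ S → σ x = b) ∧ ∀ y ∈ S.erase x, ω y = σ y} := by
    ext ω
    simp only [Set.mem_preimage, Set.mem_ofPred_eq, Finset.mem_erase]
    refine ⟨fun h => ⟨fun hx => by simpa using (h x hx).symm, fun y hy => ?_⟩, fun h y hy => ?_⟩
    · simpa [hy.1] using h y hy.2
    · by_cases hyx : y = x
      · subst hyx; simpa using (h.1 hy).symm
      · simpa [hyx] using h.2 y ⟨hyx, hy⟩
  rw [hpre]
  split_ifs with hb
  · simp only [and_iff_right hb]
  · simp [hb]

lemma bernoulli_eq_resample (E : EastProcess) (x : ℤ) :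
    E.μ = ENNReal.ofReal E.p • E.μ.map (fun ω => Function.update ω x true) +
      ENNReal.ofReal (1 - E.p) • E.μ.map (fun ω => Function.update ω x false) := by
  have hmeas (b : Bool) : Measurable fun ω : Config => Function.update ω x b := by fun_prop
  have (b : Bool) := Measure.isProbabilityMeasure_map (μ := E.μ) (hmeas b).aemeasurable
  have (r : ℝ) (b : Bool) := (E.μ.map fun ω : Config => Function.update ω x b).smul_finite
    (ENNReal.ofReal_ne_top (r := r))
  refine measure_ext_of_cylinder fun S σ => ?_
  have hcyl : MeasurableSet {ω : Config | ∀ y ∈ S, ω y = σ y} := by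
    measurability
  simp only [Measure.add_apply, Measure.smul_apply, smul_eq_mul, Measure.map_apply (hmeas _) hcyl,
    measure_preimage_update_cylinder, E.μprod]
  by_cases hx : x ∈ S
  · rw [← Finset.mul_prod_erase S _ hx]
    cases σ x <;> simp [hx]
  · simp only [hx, false_imp_iff, if_true, Finset.erase_eq_of_notMem hx]
    rw [← add_mul, ← ENNReal.ofReal_add E.hp0.le (sub_nonneg.2 E.hp1.le)]
    simp

lemma integral_siteAvg (E : EastProcess) (x : ℤ) (F : C(Config, ℝ)) :
    ∫ ω, siteAvg E.p x F ω ∂E.μ = ∫ ω, F ω ∂E.μ := by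
  have hmeas (b : Bool) : Measurable fun ω : Config => Function.update ω x b := by fun_prop
  have hint (b : Bool) : Integrable (fun ω => F (Function.update ω x b)) E.μ :=
    integrable_of_continuous (by fun_prop) _
  have hmap (b : Bool) := integral_map (μ := E.μ) (hmeas b).aemeasurable
    F.continuous.aestronglyMeasurable
  have (b : Bool) := Measure.isProbabilityMeasure_map (μ := E.μ) (hmeas b).aemeasurable
  conv_rhs => rw [bernoulli_eq_resample E x]
  simp only [siteAvg_apply]
  rw [integral_add ((hint _).const_mul _) ((hint _).const_mul _), integral_const_mul,
    integral_const_mul, integral_add_measure, integral_smul_measure, integral_smul_measure, hmap,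
    hmap, ENNReal.toReal_ofReal E.hp0.le, ENNReal.toReal_ofReal (sub_nonneg.2 E.hp1.le)]
  · rfl
  · exact (integrable_of_continuous F.continuous _).smul_measure ENNReal.ofReal_ne_top
  · exact (integrable_of_continuous F.continuous _).smul_measure ENNReal.ofReal_ne_top

/-- The configuration that equals its argument on `S` and `ω` off `S`. -/
def glue (S : Finset ℤ) (ω : Config) : C(Config, Config) where
  toFun η := S.piecewise η ω
  continuous_toFun := continuous_pi fun x => by
    by_cases hx : x ∈ S
    · simpa [hx] using continuous_apply x
    · simpa [hx] using continuous_const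

lemma glue_apply (S : Finset ℤ) (ω η : Config) : glue S ω η = S.piecewise η ω := rfl

/-- The average of a function over the coordinates in `S` under the Bernoulli measure, the
coordinates off `S` being frozen to those of `ω`. -/
def blockAvg (E : EastProcess) (S : Finset ℤ) (ω : Config) : C(Config, ℝ) →ₗ[ℝ] ℝ where
  toFun F := ∫ η, F (glue S ω η) ∂E.μ
  map_add' F G := integral_add (integrable_of_continuous (by fun_prop) _)
    (integrable_of_continuous (by fun_prop) _)
  map_smul' a F := integral_const_mul a _

lemma blockAvg_apply (E : EastProcess) (S : Finset ℤ) (ω : Config) (F : C(Config, ℝ)) :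
    blockAvg E S ω F = ∫ η, F (glue S ω η) ∂E.μ :=
  rfl

lemma blockAvg_mono {G : C(Config, ℝ)} (hFG : ∀ η, F η ≤ G η) :
    blockAvg E S ω F ≤ blockAvg E S ω G :=
  integral_mono (integrable_of_continuous (by fun_prop) _)
    (integrable_of_continuous (by fun_prop) _) fun η => hFG (glue S ω η)

lemma blockAvg_nonneg (hF : ∀ η, 0 ≤ F η) : 0 ≤ blockAvg E S ω F :=
  integral_nonneg fun η => hF (glue S ω η)

lemma blockAvg_le_of_le {B : ℝ} (hF : ∀ η, F η ≤ B) : blockAvg E S ω F ≤ B := by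
  simpa [blockAvg_apply] using
    integral_mono (μ := E.μ) (f := fun η => F (glue S ω η))
      (integrable_of_continuous (by fun_prop) _) (integrable_const B) fun η => hF (glue S ω η)

lemma blockAvg_of_dependsOnF (hF : DependsOnF F S) : blockAvg E S ω F = ∫ η, F η ∂E.μ :=
  integral_congr_ae (ae_of_all _ fun η => hF _ _ fun x hx => by
    simp [glue_apply, Finset.mem_coe.1 hx])

lemma blockAvg_mul_of_dependsOnF (hc : DependsOnF c T) (hT : ∀ x ∈ S, x ∉ T) :
    blockAvg E S ω (c * F) = c ω * blockAvg E S ω F := by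
  have hconst (η : Config) : c (glue S ω η) = c ω :=
    hc _ _ fun x hx => Finset.piecewise_eq_of_notMem _ _ _ fun hxS => hT x hxS hx
  simp only [blockAvg_apply, ContinuousMap.mul_apply, hconst]
  exact integral_const_mul _ _

lemma blockAvg_siteAvg_of_mem (hx : x ∈ S) :
    blockAvg E S ω (siteAvg E.p x F) = blockAvg E S ω F := by
  refine Eq.trans (integral_congr_ae (ae_of_all _ fun η => ?_))
    (integral_siteAvg E x (F.comp (glue S ω)))
  simp [siteAvg_apply, glue_apply, Finset.update_piecewise_of_mem _ _ _ hx]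

lemma blockAvg_siteAvg_of_notMem (hx : x ∉ S) :
    blockAvg E S ω (siteAvg E.p x F) = E.p * blockAvg E S (Function.update ω x true) F +
      (1 - E.p) * blockAvg E S (Function.update ω x false) F := by
  simp only [blockAvg_apply, ← integral_const_mul]
  rw [← integral_add (integrable_of_continuous (by fun_prop) _)
    (integrable_of_continuous (by fun_prop) _)]
  simp only [siteAvg_apply, glue_apply, Finset.update_piecewise_of_notMem _ _ _ hx]

lemma blockAvg_insert : blockAvg E (insert x S) ω F = blockAvg E S ω (siteAvg E.p x F) := by
  rw [← blockAvg_siteAvg_of_mem (Finset.mem_insert_self x S)]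
  refine integral_congr_ae (ae_of_all _ fun η => dependsOnF_siteAvg_compl F _ _ fun y hy => ?_)
  have hyx : y ≠ x := hy
  by_cases hyS : y ∈ S <;> simp [glue_apply, hyx, hyS]

lemma min_pow_card_mul_le_blockAvg (hF : ∀ η, 0 ≤ F η) (S : Finset ℤ) (ω : Config) :
    min E.p (1 - E.p) ^ S.card * F ω ≤ blockAvg E S ω F := by
  induction S using Finset.induction_on generalizing ω with
  | empty => simp [blockAvg_apply, glue_apply]
  | insert x S hx ih =>
    have hm : 0 ≤ min E.p (1 - E.p) := le_min E.hp0.le (sub_nonneg.2 E.hp1.le)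
    have hupdate : Function.update ω x (ω x) = ω := Function.update_eq_self x ω
    have hnonneg (b : Bool) : 0 ≤ blockAvg E S (Function.update ω x b) F := blockAvg_nonneg hF
    have hmin : min E.p (1 - E.p) * blockAvg E S ω F ≤ blockAvg E (insert x S) ω F := by
      rw [blockAvg_insert, blockAvg_siteAvg_of_notMem hx]
      conv_lhs => rw [← hupdate]
      have hp := mul_nonneg E.hp0.le (hnonneg true)
      have hq := mul_nonneg (sub_nonneg.2 E.hp1.le) (hnonneg false)
      cases ω x
      · linarith [mul_le_mul_of_nonneg_right (min_le_right E.p (1 - E.p)) (hnonneg false)]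
      · linarith [mul_le_mul_of_nonneg_right (min_le_left E.p (1 - E.p)) (hnonneg true)]
    refine le_trans ?_ hmin
    rw [Finset.card_insert_of_notMem hx, pow_succ', mul_assoc]
    exact mul_le_mul_of_nonneg_left (ih ω) hm

end BlockAverages

section SpectralGap

variable {E : EastProcess} {S Λ : Finset ℤ} {x : ℤ} {p : ℝ} {F : C(Config, ℝ)} {ω : Config}

/-- The variance of `F` over the value at the site `x` alone. -/
def siteVar (p : ℝ) (x : ℤ) (F : C(Config, ℝ)) : C(Config, ℝ) := (p * (1 - p)) • siteDiff x F ^ 2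

lemma siteVar_apply (F : C(Config, ℝ)) (ω : Config) :
    siteVar p x F ω = p * (1 - p) * siteDiff x F ω ^ 2 :=
  rfl

lemma siteVar_nonneg (hp : p ∈ Set.Icc 0 1) (F : C(Config, ℝ)) (ω : Config) :
    0 ≤ siteVar p x F ω :=
  mul_nonneg (mul_nonneg hp.1 (sub_nonneg.2 hp.2)) (sq_nonneg _)

lemma constraint_update_self (ω : Config) (b : Bool) :
    constraint x (Function.update ω x b) = constraint x ω :=
  (dependsOnF_constraint x).apply_update (by simp) ω b

lemma siteAvg_mul_constraint_mul_sub (F : C(Config, ℝ)) :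
    siteAvg p x (F * (constraint x * (siteAvg p x F - F))) = -(constraint x * siteVar p x F) := by
  ext ω
  simp only [siteAvg_apply, siteDiff_apply, siteVar_apply, ContinuousMap.mul_apply,
    ContinuousMap.sub_apply, ContinuousMap.neg_apply, constraint_update_self,
    Function.update_idem]
  ring

lemma integral_mul_localGen (E : EastProcess) (Λ : Finset ℤ) (F : C(Config, ℝ)) :
    ∫ ω, F ω * localGen E.p Λ F ω ∂E.μ =
      -∑ x ∈ Λ, ∫ ω, constraint x ω * siteVar E.p x F ω ∂E.μ := by
  simp only [localGen_apply, Finset.mul_sum]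
  rw [integral_finsetSum _ fun x _ => integrable_of_continuous (by fun_prop) _,
    ← Finset.sum_neg_distrib]
  refine Finset.sum_congr rfl fun x _ => ?_
  rw [← integral_neg]
  refine (integral_siteAvg E x (F * (constraint x * (siteAvg E.p x F - F)))).symm.trans ?_
  rw [siteAvg_mul_constraint_mul_sub]
  rfl

lemma neg_integral_mul_eastGen (hF : DependsOnF F S) : -∫ ω, F ω * eastGen E.p F ω ∂E.μ =
    ∑ x ∈ S, ∫ ω, constraint x ω * siteVar E.p x F ω ∂E.μ := by
  rw [eastGen_eq_localGen hF, integral_mul_localGen, neg_neg]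

lemma sum_integral_constraint_mul_siteVar_nonneg (E : EastProcess) (S : Finset ℤ)
    (F : C(Config, ℝ)) : 0 ≤ ∑ x ∈ S, ∫ ω, constraint x ω * siteVar E.p x F ω ∂E.μ :=
  Finset.sum_nonneg fun x _ => integral_nonneg fun ω =>
    mul_nonneg (constraint_nonneg x ω) (siteVar_nonneg E.p_mem_Icc F ω)

lemma nonneg_of_mem_gapSet {r : ℝ} (hr : r ∈ gapSet E) : 0 ≤ r := by
  obtain ⟨f, ⟨S, hf⟩, -, rfl⟩ := hr
  have hdir := neg_integral_mul_eastGen (E := E) (F := ⟨f, hf.continuous⟩) hf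
  rw [ContinuousMap.coe_mk] at hdir
  rw [hdir]
  exact div_nonneg (sum_integral_constraint_mul_siteVar_nonneg E S _) (variance_nonneg f E.μ)

lemma gap_nonneg (E : EastProcess) : 0 ≤ gap E := Real.sInf_nonneg fun _ => nonneg_of_mem_gapSet

lemma gap_mul_variance_le (hF : DependsOnF F S) : gap E * variance F E.μ ≤
    ∑ x ∈ S, ∫ ω, constraint x ω * siteVar E.p x F ω ∂E.μ := by
  rcases (variance_nonneg F E.μ).eq_or_lt with hvar | hvar
  · rw [← hvar, mul_zero]
    exact sum_integral_constraint_mul_siteVar_nonneg E S F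
  · rw [← neg_integral_mul_eastGen hF, ← le_div_iff₀ hvar]
    exact csInf_le ⟨0, fun _ => nonneg_of_mem_gapSet⟩ ⟨F, ⟨S, hF⟩, hvar, rfl⟩

lemma variance_eq_integral_sq (F : C(Config, ℝ)) (hmean : ∫ ω, F ω ∂E.μ = 0) :
    variance F E.μ = ∫ ω, (F ^ 2) ω ∂E.μ :=
  variance_of_integral_eq_zero F.continuous.aemeasurable hmean

/-- Freezing the boundary at empty sites only helps the dynamics inside the block: every constraint
is at least as permissive as for a random boundary. -/
lemma gap_mul_blockAvg_sq_le (hS : ∀ x ∈ S, x + 1 ∉ S → ω (x + 1) = false)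
    (hmean : blockAvg E S ω F = 0) : gap E * blockAvg E S ω (F ^ 2) ≤
      ∑ x ∈ S, blockAvg E S ω (constraint x * siteVar E.p x F) := by
  set G : C(Config, ℝ) := F.comp (glue S ω)
  have hG : DependsOnF G S := fun η η' h => congrArg F <| funext fun x => by
    by_cases hx : x ∈ S
    · simpa [glue_apply, hx] using h x hx
    · simp [glue_apply, hx]
  have hvar : variance G E.μ = blockAvg E S ω (F ^ 2) := variance_eq_integral_sq G hmean
  rw [← hvar]
  refine (gap_mul_variance_le hG).trans (Finset.sum_le_sum fun x hx => ?_)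
  refine integral_mono (integrable_of_continuous (by fun_prop) _)
    (integrable_of_continuous (by fun_prop) _) fun η => ?_
  have hsiteVar : siteVar E.p x G η = siteVar E.p x F (glue S ω η) := by
    simp [G, siteVar_apply, siteDiff_apply, glue_apply, Finset.update_piecewise_of_mem _ _ _ hx]
  have hconstraint : constraint x η ≤ constraint x (glue S ω η) := by
    by_cases hx1 : x + 1 ∈ S
    · refine (dependsOnF_constraint x η (glue S ω η) fun y hy => ?_).le
      rw [Set.mem_singleton_iff.1 hy, glue_apply, Finset.piecewise_eq_of_mem _ _ _ hx1]
    · refine (constraint_le_one x η).trans_eq (if_pos ?_).symm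
      rw [glue_apply, Finset.piecewise_eq_of_notMem _ _ _ hx1, hS x hx hx1]
  rw [hsiteVar]
  exact mul_le_mul_of_nonneg_right hconstraint (siteVar_nonneg E.p_mem_Icc F _)

end SpectralGap

/-! ### The Euler scheme -/

section EulerScheme

variable {E : EastProcess} {S Λ : Finset ℤ} {x y z a b z₀ : ℤ} {p δ β : ℝ} {F f : C(Config, ℝ)}
  {ω : Config}

lemma abs_add_mul_sum_mul_sub_le {ι : Type*} {s : Finset ι} {c A : ι → ℝ} {g B : ℝ} (hδ : 0 ≤ δ)
    (hc : ∀ i ∈ s, 0 ≤ c i) (hsum : δ * ∑ i ∈ s, c i ≤ 1) (hg : |g| ≤ B)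
    (hA : ∀ i ∈ s, |A i| ≤ B) : |g + δ * ∑ i ∈ s, c i * (A i - g)| ≤ B := by
  have hconvex : g + δ * ∑ i ∈ s, c i * (A i - g) =
      (1 - δ * ∑ i ∈ s, c i) * g + δ * ∑ i ∈ s, c i * A i := by
    simp only [mul_sub, Finset.sum_sub_distrib, ← Finset.sum_mul]
    ring
  have hsumA : |∑ i ∈ s, c i * A i| ≤ (∑ i ∈ s, c i) * B := by
    rw [Finset.sum_mul]
    refine (Finset.abs_sum_le_sum_abs _ _).trans (Finset.sum_le_sum fun i hi => ?_)
    rw [abs_mul, abs_of_nonneg (hc i hi)]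
    exact mul_le_mul_of_nonneg_left (hA i hi) (hc i hi)
  calc _ ≤ |(1 - δ * ∑ i ∈ s, c i) * g| + |δ * ∑ i ∈ s, c i * A i| := by
        rw [hconvex]
        exact abs_add_le _ _
    _ ≤ (1 - δ * ∑ i ∈ s, c i) * B + δ * ((∑ i ∈ s, c i) * B) := by
        rw [abs_mul, abs_mul, abs_of_nonneg hδ, abs_of_nonneg (sub_nonneg.2 hsum)]
        gcongr
    _ = B := by ring

lemma mul_sum_constraint_le_one (hδ : 0 ≤ δ) (hδΛ : δ * Λ.card ≤ 1) (ω : Config) :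
    δ * ∑ x ∈ Λ, constraint x ω ≤ 1 := by
  refine le_trans (mul_le_mul_of_nonneg_left ?_ hδ) hδΛ
  simpa using Finset.sum_le_sum fun x (_ : x ∈ Λ) => constraint_le_one x ω

lemma norm_eulerStep_le (hp : p ∈ Set.Icc 0 1) (hδ : 0 ≤ δ) (hδΛ : δ * Λ.card ≤ 1)
    (F : C(Config, ℝ)) : ‖eulerStep p Λ δ F‖ ≤ ‖F‖ := by
  refine (ContinuousMap.norm_le _ (norm_nonneg F)).2 fun ω => ?_
  simp only [eulerStep_apply, ContinuousMap.add_apply, ContinuousMap.smul_apply, localGen_apply,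
    smul_eq_mul, Real.norm_eq_abs]
  exact abs_add_mul_sum_mul_sub_le hδ (fun x _ => constraint_nonneg x ω)
    (mul_sum_constraint_le_one hδ hδΛ ω) (F.norm_coe_le_norm ω)
    fun x _ => abs_siteAvg_le hp F.norm_coe_le_norm ω

lemma norm_eulerStep_pow_le (hp : p ∈ Set.Icc 0 1) (hδ : 0 ≤ δ) (hδΛ : δ * Λ.card ≤ 1)
    (F : C(Config, ℝ)) (j : ℕ) : ‖(eulerStep p Λ δ ^ j) F‖ ≤ ‖F‖ := by
  induction j with
  | zero => rfl
  | succ j ih => rw [pow_succ']; exact (norm_eulerStep_le hp hδ hδΛ _).trans ih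

lemma norm_siteDiff_le (x : ℤ) (F : C(Config, ℝ)) : ‖siteDiff x F‖ ≤ 2 * ‖F‖ := by
  refine (ContinuousMap.norm_le _ (by positivity)).2 fun ω => ?_
  rw [siteDiff_apply, two_mul]
  exact norm_sub_le_of_le (F.norm_coe_le_norm _) (F.norm_coe_le_norm _)

lemma norm_siteDiff_siteAvg_le (hp : p ∈ Set.Icc 0 1) (x y : ℤ) (F : C(Config, ℝ)) :
    ‖siteDiff y (siteAvg p x F)‖ ≤ ‖siteDiff y F‖ := by
  by_cases hyx : y = x
  · rw [hyx, siteDiff_of_dependsOnF (dependsOnF_siteAvg_compl F) (by simp), norm_zero]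
    exact norm_nonneg _
  · rw [siteDiff_siteAvg F hyx]
    exact (ContinuousMap.norm_le _ (norm_nonneg _)).2
      fun ω => abs_siteAvg_le hp (siteDiff y F).norm_coe_le_norm ω

lemma siteDiff_constraint_mul (hxy : y ≠ x + 1) (F : C(Config, ℝ)) :
    siteDiff y (constraint x * F) = constraint x * siteDiff y F :=
  siteDiff_mul (dependsOnF_constraint x) hxy F

lemma siteDiff_add_one_constraint_mul (F : C(Config, ℝ)) (ω : Config) :
    siteDiff (x + 1) (constraint x * F) ω = -F (Function.update ω (x + 1) false) := by
  simp [siteDiff_apply, constraint]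

lemma abs_siteDiff_constraint_mul_sub_le (hp : p ∈ Set.Icc 0 1) (x : ℤ) (F : C(Config, ℝ))
    (ω : Config) : |siteDiff (x + 1) (constraint x * (siteAvg p x F - F)) ω| ≤ ‖siteDiff x F‖ := by
  rw [siteDiff_add_one_constraint_mul, abs_neg]
  exact (abs_siteAvg_sub_self_le hp F _).trans ((siteDiff x F).norm_coe_le_norm _)

/-- Influence travels to the right by at most one site per step, because the value at `x + 1` enters
the dynamics to its left only through the constraint at `x`. -/
lemma norm_siteDiff_eulerStep_le (hp : p ∈ Set.Icc 0 1) (hδ : 0 ≤ δ) (hδΛ : δ * Λ.card ≤ 1)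
    (x : ℤ) (F : C(Config, ℝ)) :
    ‖siteDiff (x + 1) (eulerStep p Λ δ F)‖ ≤ ‖siteDiff (x + 1) F‖ + δ * ‖siteDiff x F‖ := by
  refine (ContinuousMap.norm_le _ (by positivity)).2 fun ω => ?_
  have hterm (y : ℤ) (hy : y ∈ Λ.erase x) :
      siteDiff (x + 1) (constraint y * (siteAvg p y F - F)) ω =
        constraint y ω * (siteDiff (x + 1) (siteAvg p y F) ω - siteDiff (x + 1) F ω) := by
    rw [siteDiff_constraint_mul (by simpa using (Finset.ne_of_mem_erase hy).symm), map_sub]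
    rfl
  have herase : |siteDiff (x + 1) F ω +
      δ * ∑ y ∈ Λ.erase x, siteDiff (x + 1) (constraint y * (siteAvg p y F - F)) ω| ≤
        ‖siteDiff (x + 1) F‖ := by
    rw [Finset.sum_congr rfl hterm]
    have hcard : δ * (Λ.erase x).card ≤ 1 :=
      le_trans (by gcongr; exact Finset.erase_subset x Λ) hδΛ
    exact abs_add_mul_sum_mul_sub_le hδ (fun y _ => constraint_nonneg y ω)
      (mul_sum_constraint_le_one hδ hcard ω) ((siteDiff (x + 1) F).norm_coe_le_norm ω) fun y _ =>
        ((siteDiff (x + 1) _).norm_coe_le_norm ω).trans (norm_siteDiff_siteAvg_le hp y (x + 1) F)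
  have hstep : siteDiff (x + 1) (eulerStep p Λ δ F) ω = siteDiff (x + 1) F ω +
      δ * ∑ y ∈ Λ, siteDiff (x + 1) (constraint y * (siteAvg p y F - F)) ω := by
    simp [eulerStep_apply, localGen_eq_sum]
  rw [hstep, Real.norm_eq_abs]
  by_cases hx : x ∈ Λ
  · rw [← Finset.sum_erase_add Λ _ hx, mul_add, ← add_assoc]
    refine (abs_add_le _ _).trans (add_le_add herase ?_)
    rw [abs_mul, abs_of_nonneg hδ]
    exact mul_le_mul_of_nonneg_left (abs_siteDiff_constraint_mul_sub_le hp x F ω) hδ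
  · rw [Finset.erase_eq_of_notMem hx] at herase
    exact le_add_of_le_of_nonneg herase (by positivity)

lemma norm_siteDiff_eulerStep_pow_le (hp : p ∈ Set.Icc 0 1) (hδ : 0 ≤ δ) (hδΛ : δ * Λ.card ≤ 1)
    (hf : DependsOnF f (Set.Iic z)) (j r : ℕ) :
    ‖siteDiff (z + r) ((eulerStep p Λ δ ^ j) f)‖ ≤ 2 * ‖f‖ * (j.choose r * δ ^ r) := by
  induction j generalizing r with
  | zero =>
    cases r with
    | zero => simpa using norm_siteDiff_le z f
    | succ r => simp [siteDiff_of_dependsOnF hf (x := z + (r + 1)) (by simp)]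
  | succ j ih =>
    cases r with
    | zero =>
      refine (norm_siteDiff_le _ _).trans ?_
      simpa using norm_eulerStep_pow_le hp hδ hδΛ f (j + 1)
    | succ r =>
      rw [pow_succ', Nat.cast_succ, ← add_assoc]
      refine (norm_siteDiff_eulerStep_le hp hδ hδΛ (z + r) _).trans ?_
      have hr := ih r
      have hr1 := ih (r + 1)
      rw [Nat.cast_succ, ← add_assoc] at hr1
      refine (add_le_add hr1 (mul_le_mul_of_nonneg_left hr hδ)).trans_eq ?_
      rw [Nat.choose_succ_succ']
      push_cast
      ring

lemma blockAvg_eulerStep_eq_zero (hΛ : ∀ x ∈ Λ, x ∉ S → x + 1 ∉ S)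
    (hF : ∀ ω, blockAvg E S ω F = 0) (δ : ℝ) (ω : Config) :
    blockAvg E S ω (eulerStep E.p Λ δ F) = 0 := by
  have hterm (x : ℤ) (hx : x ∈ Λ) :
      blockAvg E S ω (constraint x * (siteAvg E.p x F - F)) = 0 := by
    by_cases hxS : x ∈ S
    · rw [mul_sub, ← siteAvg_mul (dependsOnF_constraint x) (by simp), map_sub,
        blockAvg_siteAvg_of_mem hxS, sub_self]
    · rw [blockAvg_mul_of_dependsOnF (dependsOnF_constraint x) fun y hy hyx =>
          hΛ x hx hxS (Set.mem_singleton_iff.1 hyx ▸ hy), map_sub, blockAvg_siteAvg_of_notMem hxS]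
      simp [hF]
  rw [eulerStep_apply, map_add, hF, map_smul, localGen_eq_sum, map_sum,
    Finset.sum_eq_zero hterm, smul_zero, add_zero]

/-- Whenever `z₀ ≤ z ≤ b` and `z` is empty, the second moment of `F` over the block `[a, z)` is at
most `β`. An empty site shields the dynamics to its left from the rest, so this survives the Euler
steps. -/
def BlockSecondMomentLE (E : EastProcess) (a z₀ b : ℤ) (F : C(Config, ℝ)) (β : ℝ) : Prop :=
  ∀ z ∈ Set.Icc z₀ b, ∀ ω : Config, ω z = false → blockAvg E (Finset.Ico a z) ω (F ^ 2) ≤ β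

lemma sum_blockAvg_mul_constraint_mul_le (hS : ∀ x ∈ S, x + 1 ∉ S → ω (x + 1) = false)
    (hmean : blockAvg E S ω F = 0) :
    ∑ x ∈ S, blockAvg E S ω (F * (constraint x * (siteAvg E.p x F - F))) ≤
      -(gap E * blockAvg E S ω (F ^ 2)) := by
  refine le_neg.1 ((gap_mul_blockAvg_sq_le hS hmean).trans_eq ?_)
  rw [← Finset.sum_neg_distrib]
  refine Finset.sum_congr rfl fun x hx => ?_
  rw [← blockAvg_siteAvg_of_mem (F := F * _) hx, siteAvg_mul_constraint_mul_sub, map_neg, neg_neg]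

lemma blockAvg_mul_constraint_mul_le (hx : x + 1 ∉ S) :
    2 * blockAvg E S ω (F * (constraint x * (siteAvg E.p x F - F))) ≤
      constraint x ω * (blockAvg E S ω (siteAvg E.p x (F ^ 2)) - blockAvg E S ω (F ^ 2)) := by
  rw [← map_sub, ← blockAvg_mul_of_dependsOnF (dependsOnF_constraint x)
    fun y hy hyx => hx (Set.mem_singleton_iff.1 hyx ▸ hy), ← smul_eq_mul, ← map_smul]
  refine blockAvg_mono fun η => ?_
  simp only [ContinuousMap.smul_apply, ContinuousMap.mul_apply, ContinuousMap.sub_apply,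
    siteAvg_apply, ContinuousMap.pow_apply, smul_eq_mul]
  have hp := mul_nonneg E.hp0.le (sq_nonneg (F (Function.update η x true) - F η))
  have hq := mul_nonneg (sub_nonneg.2 E.hp1.le) (sq_nonneg (F (Function.update η x false) - F η))
  nlinarith [mul_nonneg (constraint_nonneg x η) (add_nonneg hp hq)]

lemma BlockSecondMomentLE.constraint_mul_le (hF : BlockSecondMomentLE E a z₀ b F β)
    (hz : z ∈ Set.Icc z₀ b) (haz : a ≤ z) (hω : ω z = false) (hx : x ∈ Finset.Ico z b) :
    constraint x ω * blockAvg E (Finset.Ico a z) ω (siteAvg E.p x (F ^ 2)) ≤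
      constraint x ω * β := by
  obtain ⟨hzx, hxb⟩ := Finset.mem_Ico.1 hx
  by_cases hω1 : ω (x + 1) = false
  swap
  · simp [constraint, hω1]
  refine mul_le_mul_of_nonneg_left ?_ (constraint_nonneg x ω)
  rcases hzx.eq_or_lt with rfl | hzx
  · rw [← blockAvg_insert, Finset.insert_Ico_right_eq_Ico_add_one haz]
    exact hF (z + 1) ⟨by linarith [hz.1], hxb⟩ ω hω1
  · have hupdate (b' : Bool) :=
      hF z hz (Function.update ω x b') (by rwa [Function.update_of_ne hzx.ne])
    rw [blockAvg_siteAvg_of_notMem (by simp [hzx.le])]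
    calc _ ≤ E.p * β + (1 - E.p) * β := add_le_add
          (mul_le_mul_of_nonneg_left (hupdate true) E.hp0.le)
          (mul_le_mul_of_nonneg_left (hupdate false) (sub_nonneg.2 E.hp1.le))
      _ = β := by ring

lemma blockAvg_eulerStep_sq_le (E : EastProcess) (S Λ : Finset ℤ) (ω : Config) (δ : ℝ)
    (F : C(Config, ℝ)) : blockAvg E S ω (eulerStep E.p Λ δ F ^ 2) ≤ blockAvg E S ω (F ^ 2) +
      2 * δ * ∑ x ∈ Λ, blockAvg E S ω (F * (constraint x * (siteAvg E.p x F - F))) +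
        δ ^ 2 * ‖localGen E.p Λ F‖ ^ 2 := by
  have hexpand : eulerStep E.p Λ δ F ^ 2 = F ^ 2 +
      (2 * δ) • ∑ x ∈ Λ, F * (constraint x * (siteAvg E.p x F - F)) +
        δ ^ 2 • localGen E.p Λ F ^ 2 := by
    rw [← Finset.mul_sum, ← localGen_eq_sum, eulerStep_apply]
    ext η
    simp only [ContinuousMap.pow_apply, ContinuousMap.add_apply, ContinuousMap.smul_apply,
      ContinuousMap.mul_apply, smul_eq_mul]
    ring
  rw [hexpand, map_add, map_add, map_smul, map_smul, map_sum, smul_eq_mul, smul_eq_mul]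
  gcongr
  refine blockAvg_le_of_le fun η => ?_
  exact sq_le_sq' (neg_le_of_abs_le ((localGen E.p Λ F).norm_coe_le_norm η))
    (le_of_abs_le ((localGen E.p Λ F).norm_coe_le_norm η))

lemma BlockSecondMomentLE.eulerStep (hF : BlockSecondMomentLE E a z₀ b F β) (haz₀ : a ≤ z₀)
    (hmean : ∀ z ∈ Set.Icc z₀ b, ∀ ω, blockAvg E (Finset.Ico a z) ω F = 0) (hδ : 0 ≤ δ)
    (hδgap : δ * (2 * gap E + (Finset.Ico a b).card) ≤ 1) :
    BlockSecondMomentLE E a z₀ b (eulerStep E.p (Finset.Ico a b) δ F)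
      ((1 - 2 * δ * gap E) * β + δ ^ 2 * ‖localGen E.p (Finset.Ico a b) F‖ ^ 2) := by
  intro z hz ω hω
  have haz : a ≤ z := haz₀.trans hz.1
  refine (blockAvg_eulerStep_sq_le E _ _ ω δ F).trans (add_le_add_left ?_ _)
  rw [← Finset.Ico_union_Ico_eq_Ico haz hz.2,
    Finset.sum_union (Finset.Ico_disjoint_Ico_consecutive a z b)]
  set v := blockAvg E (Finset.Ico a z) ω (F ^ 2)
  set rate := ∑ x ∈ Finset.Ico z b, constraint x ω
  have hv : v ≤ β := hF z hz ω hω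
  have hleft := sum_blockAvg_mul_constraint_mul_le (ω := ω) (S := Finset.Ico a z)
    (fun x hx hx1 => by
      rw [Finset.mem_Ico] at hx hx1
      rwa [show x + 1 = z by omega]) (hmean z hz ω)
  have hright : 2 * ∑ x ∈ Finset.Ico z b, blockAvg E (Finset.Ico a z) ω
      (F * (constraint x * (siteAvg E.p x F - F))) ≤ rate * (β - v) := by
    rw [Finset.mul_sum, Finset.sum_mul]
    refine Finset.sum_le_sum fun x hx => ?_
    have hx1 : x + 1 ∉ Finset.Ico a z := by
      rw [Finset.mem_Ico] at hx ⊢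
      omega
    linarith [blockAvg_mul_constraint_mul_le (E := E) (F := F) (ω := ω) hx1,
      hF.constraint_mul_le hz haz hω hx]
  have hrate : rate ≤ (Finset.Ico a b).card := by
    calc rate ≤ (Finset.Ico z b).card := by
          simpa using Finset.sum_le_sum fun x (_ : x ∈ Finset.Ico z b) => constraint_le_one x ω
      _ ≤ (Finset.Ico a b).card := mod_cast Finset.card_le_card (Finset.Ico_subset_Ico_left haz)
  have hcoef : 0 ≤ 1 - δ * (2 * gap E + rate) := by
    linarith [mul_le_mul_of_nonneg_left hrate hδ]
  linarith [mul_le_mul_of_nonneg_left hv hcoef, mul_le_mul_of_nonneg_left hleft hδ,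
    mul_le_mul_of_nonneg_left hright hδ]

lemma DependsOnF.mono_Ico (hf : DependsOnF f (Finset.Ico a z₀)) (hz : z₀ ≤ z) :
    DependsOnF f (Finset.Ico a z) :=
  hf.mono (Finset.coe_subset.2 (Finset.Ico_subset_Ico_right hz))

lemma BlockSecondMomentLE.of_dependsOnF (hf : DependsOnF f (Finset.Ico a z₀))
    (hmean : ∫ ω, f ω ∂E.μ = 0) (b : ℤ) : BlockSecondMomentLE E a z₀ b f (variance f E.μ) := by
  intro z hz ω _
  have hsq : DependsOnF (f ^ 2 : C(Config, ℝ)) (Finset.Ico a z) := fun η η' h => by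
    simp only [ContinuousMap.pow_apply, hf.mono_Ico hz.1 η η' h]
  rw [blockAvg_of_dependsOnF hsq, variance_eq_integral_sq f hmean]

lemma blockAvg_eulerStep_pow_eq_zero (hf : DependsOnF f (Finset.Ico a z₀))
    (hmean : ∫ ω, f ω ∂E.μ = 0) (hz : z₀ ≤ z) (b : ℤ) (δ : ℝ) (j : ℕ) (ω : Config) :
    blockAvg E (Finset.Ico a z) ω ((eulerStep E.p (Finset.Ico a b) δ ^ j) f) = 0 := by
  induction j generalizing ω with
  | zero => exact (blockAvg_of_dependsOnF (hf.mono_Ico hz)).trans hmean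
  | succ j ih =>
    rw [pow_succ']
    refine blockAvg_eulerStep_eq_zero (fun x hx hxz => ?_) ih δ ω
    simp only [Finset.mem_Ico] at hx hxz ⊢
    omega

lemma blockSecondMomentLE_eulerStep_pow (hf : DependsOnF f (Finset.Ico a z₀)) (haz₀ : a ≤ z₀)
    (hmean : ∫ ω, f ω ∂E.μ = 0) (hδ : 0 ≤ δ)
    (hδgap : δ * (2 * gap E + (Finset.Ico a b).card) ≤ 1) (j : ℕ) :
    BlockSecondMomentLE E a z₀ b ((eulerStep E.p (Finset.Ico a b) δ ^ j) f)
      ((1 - 2 * δ * gap E) ^ j * variance f E.μ +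
        j * (δ * (2 * (Finset.Ico a b).card * ‖f‖)) ^ 2) := by
  have hδg : 0 ≤ δ * gap E := mul_nonneg hδ (gap_nonneg E)
  have hδΛ : δ * (Finset.Ico a b).card ≤ 1 := by linarith
  have hfactor : 1 - 2 * δ * gap E ≤ 1 := by linarith
  induction j with
  | zero => simpa using BlockSecondMomentLE.of_dependsOnF hf hmean b
  | succ j ih =>
    have hmeans (z : ℤ) (hz : z ∈ Set.Icc z₀ b) :=
      blockAvg_eulerStep_pow_eq_zero hf hmean hz.1 b δ j
    rw [pow_succ']
    intro z hz ω hω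
    refine (ih.eulerStep haz₀ hmeans hδ hδgap z hz ω hω).trans ?_
    have hnorm : ‖localGen E.p (Finset.Ico a b) ((eulerStep E.p (Finset.Ico a b) δ ^ j) f)‖ ≤
        2 * (Finset.Ico a b).card * ‖f‖ :=
      (norm_localGen_le E.p_mem_Icc _ _).trans
        (by gcongr; exact norm_eulerStep_pow_le E.p_mem_Icc hδ hδΛ f j)
    set C := 2 * (Finset.Ico a b).card * ‖f‖
    calc _ ≤ (1 - 2 * δ * gap E) * ((1 - 2 * δ * gap E) ^ j * variance f E.μ) +
          1 * (j * (δ * C) ^ 2) + δ ^ 2 * C ^ 2 := by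
          rw [mul_add]
          gcongr
      _ = _ := by push_cast; ring

end EulerScheme

/-! ### Relaxation behind a fixed empty site -/

section Relaxation

variable {E : EastProcess} {Λ : Finset ℤ} {a b z₀ : ℤ} {p δ t : ℝ} {F f : C(Config, ℝ)}
  {ω : Config} {N : ℕ}

lemma EastProcess.isFellerSemigroup (E : EastProcess) : IsFellerSemigroup E.P :=
  ⟨E.markov, E.P0, E.semigroup, E.feller, E.timeCont⟩

lemma EastProcess.hasGenerator_s3 (E : EastProcess) (hF : DependsOnF F Λ) :
    HasGenerator E.P F (localGen E.p Λ F) := fun ω =>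
  eastGen_eq_localGen hF E.p ▸ E.generator F ⟨Λ, hF⟩ ω

lemma localGen_Ico_add_one (hab : a ≤ b) (F : C(Config, ℝ)) :
    localGen p (Finset.Ico a (b + 1)) F =
      constraint b * (siteAvg p b F - F) + localGen p (Finset.Ico a b) F := by
  simp only [localGen_eq_sum, ← Finset.insert_Ico_right_eq_Ico_add_one hab]
  exact Finset.sum_insert (by simp)

lemma add_one_mem_Ico_add_one {x : ℤ} (hx : x ∈ Finset.Ico a b) :
    x + 1 ∈ (Finset.Ico a (b + 1) : Set ℤ) := by
  simp only [Finset.coe_Ico, Set.mem_Ico, Finset.mem_Ico] at hx ⊢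
  omega

lemma abs_evolve_sub_taylor_localGen_le (hF : DependsOnF F (Finset.Ico a b)) (hδ : 0 ≤ δ)
    (ω : Config) : |evolve E.P δ F ω - (F ω + δ * localGen E.p (Finset.Ico a b) F ω)| ≤
      (2 * (Finset.Ico a (b + 1)).card) ^ 2 * ‖F‖ * δ ^ 2 := by
  have hgenF : DependsOnF (localGen E.p (Finset.Ico a b) F) (Finset.Ico a (b + 1)) :=
    (hF.mono_Ico (by linarith)).localGen (fun _ => add_one_mem_Ico_add_one) E.p
  have hbound : ‖localGen E.p (Finset.Ico a (b + 1)) (localGen E.p (Finset.Ico a b) F)‖ ≤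
      (2 * (Finset.Ico a (b + 1)).card) ^ 2 * ‖F‖ :=
    calc _ ≤ 2 * (Finset.Ico a (b + 1)).card * ‖localGen E.p (Finset.Ico a b) F‖ :=
          norm_localGen_le E.p_mem_Icc _ _
      _ ≤ 2 * (Finset.Ico a (b + 1)).card * (2 * (Finset.Ico a b).card * ‖F‖) := by
          gcongr
          exact norm_localGen_le E.p_mem_Icc _ _
      _ ≤ 2 * (Finset.Ico a (b + 1)).card * (2 * (Finset.Ico a (b + 1)).card * ‖F‖) := by
          gcongr
          linarith
      _ = _ := by ring
  exact E.isFellerSemigroup.abs_evolve_sub_taylor_le F.continuous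
    (localGen E.p _ F).continuous (localGen E.p _ _).continuous (E.hasGenerator_s3 hF)
    (E.hasGenerator_s3 hgenF) (fun η => (ContinuousMap.norm_coe_le_norm _ η).trans hbound) hδ ω

lemma abs_evolve_sub_eulerStep_le (hab : a ≤ b) (hF : DependsOnF F (Finset.Ico a (b + 1)))
    (hδ : 0 ≤ δ) (ω : Config) :
    |evolve E.P δ F ω - eulerStep E.p (Finset.Ico a b) δ F ω| ≤
      (2 * (Finset.Ico a (b + 2)).card) ^ 2 * ‖F‖ * δ ^ 2 + δ * ‖siteDiff b F‖ := by
  have htaylor := abs_evolve_sub_taylor_localGen_le (E := E) hF hδ ω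
  rw [add_assoc, one_add_one_eq_two] at htaylor
  have hedge : |constraint b ω * (siteAvg E.p b F ω - F ω)| ≤ ‖siteDiff b F‖ := by
    rw [abs_mul, abs_of_nonneg (constraint_nonneg b ω)]
    exact (mul_le_of_le_one_left (abs_nonneg _) (constraint_le_one b ω)).trans
      ((abs_siteAvg_sub_self_le E.p_mem_Icc F ω).trans ((siteDiff b F).norm_coe_le_norm ω))
  calc _ = |(evolve E.P δ F ω - (F ω + δ * localGen E.p (Finset.Ico a (b + 1)) F ω)) +
        δ * (constraint b ω * (siteAvg E.p b F ω - F ω))| := by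
        rw [localGen_Ico_add_one hab, eulerStep_apply]
        simp only [ContinuousMap.add_apply, ContinuousMap.smul_apply, ContinuousMap.mul_apply,
          ContinuousMap.sub_apply, smul_eq_mul]
        ring_nf
    _ ≤ _ := (abs_add_le _ _).trans (add_le_add htaylor ?_)
  rw [abs_mul, abs_of_nonneg hδ]
  exact mul_le_mul_of_nonneg_left hedge hδ

lemma choose_mul_div_pow_le {j : ℕ} (hj : j ≤ N) (ht : 0 ≤ t) (r : ℕ) :
    j.choose r * (t / N) ^ r ≤ t ^ r / r.factorial := by
  rcases N.eq_zero_or_pos with rfl | hN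
  · cases r with
    | zero => simp
    | succ r => simpa using div_nonneg (pow_nonneg ht (r + 1)) (Nat.cast_nonneg (r + 1).factorial)
  calc j.choose r * (t / N) ^ r ≤ (N : ℝ) ^ r / r.factorial * (t / N) ^ r := by
        gcongr
        exact (Nat.cast_le.2 (Nat.choose_le_choose r hj)).trans (Nat.choose_le_pow_div r N)
    _ = _ := by rw [div_mul_eq_mul_div, ← mul_pow, mul_div_cancel₀ t (by positivity)]

lemma abs_evolve_sub_eulerStep_pow_le (hf : DependsOnF f (Finset.Ico a z₀)) (haz₀ : a ≤ z₀)
    (ht : 0 ≤ t) (hN : 0 < N) {r : ℕ} (hNΛ : t / N * (Finset.Ico a (z₀ + r)).card ≤ 1)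
    (ω : Config) :
    |evolve E.P t f ω - (eulerStep E.p (Finset.Ico a (z₀ + r)) (t / N) ^ N) f ω| ≤
      (2 * (Finset.Ico a (z₀ + r + 2)).card) ^ 2 * ‖f‖ * t ^ 2 / N +
        2 * t * ‖f‖ * (t ^ r / r.factorial) := by
  have hδ : 0 ≤ t / N := by positivity
  have hlight : DependsOnF f (Set.Iic z₀) :=
    hf.mono fun x hx => (Finset.mem_Ico.1 hx).2.le
  set T := eulerStep E.p (Finset.Ico a (z₀ + r)) (t / N)
  have hdep (j : ℕ) : DependsOnF ((T ^ j) f) (Finset.Ico a (z₀ + r + 1)) :=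
    (hf.mono_Ico (by linarith)).eulerStep_pow (fun _ => add_one_mem_Ico_add_one) E.p _ j
  have hstep (j : ℕ) (hj : j < N) (η : Config) :
      |evolve E.P (t / N) ((T ^ j) f) η - (T ^ (j + 1)) f η| ≤
        (2 * (Finset.Ico a (z₀ + r + 2)).card) ^ 2 * ‖f‖ * (t / N) ^ 2 +
          t / N * (2 * ‖f‖ * (t ^ r / r.factorial)) := by
    rw [pow_succ']
    refine (abs_evolve_sub_eulerStep_le (by linarith) (hdep j) hδ η).trans ?_
    gcongr
    · exact norm_eulerStep_pow_le E.p_mem_Icc hδ hNΛ f j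
    · refine (norm_siteDiff_eulerStep_pow_le E.p_mem_Icc hδ hNΛ hlight j r).trans ?_
      gcongr
      exact choose_mul_div_pow_le hj.le ht r
  have herror := E.isFellerSemigroup.abs_evolve_nat_mul_sub_le
    (fun j => ((T ^ j) f).continuous) hδ hstep ω
  rw [pow_zero, Module.End.one_apply, mul_div_cancel₀ t (by positivity)] at herror
  refine herror.trans_eq ?_
  field_simp

lemma abs_eulerStep_pow_le (hf : DependsOnF f (Finset.Ico a z₀)) (haz₀ : a ≤ z₀) (hz₀b : z₀ ≤ b)
    (hmean : ∫ ω, f ω ∂E.μ = 0) (hω : ω z₀ = false) (ht : 0 ≤ t) (hN : 0 < N)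
    (hNgap : t / N * (2 * gap E + (Finset.Ico a b).card) ≤ 1) :
    |(eulerStep E.p (Finset.Ico a b) (t / N) ^ N) f ω| ≤
      √((Real.exp (-(2 * t * gap E)) * variance f E.μ +
        (t * (2 * (Finset.Ico a b).card * ‖f‖)) ^ 2 / N) /
          min E.p (1 - E.p) ^ (Finset.Ico a z₀).card) := by
  have hδ : 0 ≤ t / N := by positivity
  have hm : 0 < min E.p (1 - E.p) := lt_min E.hp0 (sub_pos.2 E.hp1)
  set g := (eulerStep E.p (Finset.Ico a b) (t / N) ^ N) f
  have hmoment := blockSecondMomentLE_eulerStep_pow hf haz₀ hmean hδ hNgap N z₀ ⟨le_rfl, hz₀b⟩ ω hω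
  have hmin := min_pow_card_mul_le_blockAvg (E := E) (F := g ^ 2) (fun η => sq_nonneg (g η))
    (Finset.Ico a z₀) ω
  have hexp : (1 - 2 * (t / N) * gap E) ^ N ≤ Real.exp (-(2 * t * gap E)) := by
    have hrate : 2 * (t / N) * gap E = 2 * t * gap E / N := by ring
    have hle : t / N * (2 * gap E) ≤ 1 :=
      (mul_le_mul_of_nonneg_left (le_add_of_nonneg_right (Nat.cast_nonneg _)) hδ).trans hNgap
    rw [hrate]
    refine Real.one_sub_div_pow_le_exp_neg ((div_le_one₀ (by positivity)).1 (Eq.trans_le ?_ hle))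
    ring
  refine Real.abs_le_sqrt ((le_div_iff₀' (pow_pos hm _)).2 (hmin.trans (hmoment.trans ?_)))
  refine add_le_add (mul_le_mul_of_nonneg_right hexp (variance_nonneg _ _)) (le_of_eq ?_)
  field_simp

lemma abs_evolve_le_add (hf : DependsOnF f (Finset.Ico a z₀)) (haz₀ : a ≤ z₀)
    (hmean : ∫ ω, f ω ∂E.μ = 0) (hω : ω z₀ = false) (ht : 0 ≤ t) (r : ℕ) :
    |evolve E.P t f ω| ≤
      √(Real.exp (-(2 * t * gap E)) * variance f E.μ /
        min E.p (1 - E.p) ^ (Finset.Ico a z₀).card) + 2 * t * ‖f‖ * (t ^ r / r.factorial) := by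
  have hlim (c : ℝ) := tendsto_const_div_atTop_nhds_zero_nat c
  have hsmall : ∀ᶠ N : ℕ in atTop,
      t / N * (2 * gap E + (Finset.Ico a (z₀ + r)).card) ≤ 1 :=
    ((hlim t).mul_const _).eventually_le_const (by simp)
  refine ge_of_tendsto (x := atTop) (b := evolve E.P t f ω |> abs) (f := fun N : ℕ =>
    √((Real.exp (-(2 * t * gap E)) * variance f E.μ +
      (t * (2 * (Finset.Ico a (z₀ + r)).card * ‖f‖)) ^ 2 / N) /
        min E.p (1 - E.p) ^ (Finset.Ico a z₀).card) +
      ((2 * (Finset.Ico a (z₀ + r + 2)).card) ^ 2 * ‖f‖ * t ^ 2 / N +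
        2 * t * ‖f‖ * (t ^ r / r.factorial))) ?_ ?_
  · simpa using ((((hlim _).const_add _).div_const _).sqrt).add ((hlim _).add_const _)
  · filter_upwards [hsmall, eventually_gt_atTop 0] with N hNgap hN
    have hNΛ : t / N * (Finset.Ico a (z₀ + r)).card ≤ 1 := le_trans
      (by gcongr; exact le_add_of_nonneg_left (mul_nonneg zero_le_two (gap_nonneg E))) hNgap
    have hscheme := abs_eulerStep_pow_le hf haz₀ (by linarith) hmean hω ht hN hNgap
    have herror := abs_evolve_sub_eulerStep_pow_le (E := E) hf haz₀ ht hN hNΛ ω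
    linarith [abs_sub_abs_le_abs_sub (evolve E.P t f ω)
      ((eulerStep E.p (Finset.Ico a (z₀ + r)) (t / N) ^ N) f ω)]

lemma abs_evolve_le_sqrt_variance_mul_exp (hf : DependsOnF f (Finset.Ico a z₀)) (haz₀ : a ≤ z₀)
    (hmean : ∫ ω, f ω ∂E.μ = 0) (hω : ω z₀ = false) (ht : 0 ≤ t) :
    |evolve E.P t f ω| ≤ √(variance f E.μ / min E.p (1 - E.p) ^ (Finset.Ico a z₀).card) *
      Real.exp (-t * gap E) := by
  have hfactorial := (FloorSemiring.tendsto_pow_div_factorial_atTop t).const_mul (2 * t * ‖f‖)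
  have hexp : Real.exp (-(2 * t * gap E)) = Real.exp (-t * gap E) ^ 2 := by
    rw [← Real.exp_nat_mul]
    congr 1
    push_cast
    ring
  have hle := ge_of_tendsto' (hfactorial.const_add _)
    (abs_evolve_le_add hf haz₀ hmean hω ht)
  rwa [mul_zero, add_zero, hexp, mul_div_assoc, Real.sqrt_mul (sq_nonneg _),
    Real.sqrt_sq (Real.exp_pos _).le, mul_comm] at hle

end Relaxation

/-! ### The frame of the front -/

section Front

lemma apply_front_of_mem_LO {η : Config} (hη : η ∈ LO) : η (front η) = false := by
  obtain ⟨⟨y, hy⟩, hzero⟩ := hη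
  refine Int.csInf_mem (s := {x : ℤ | η x = false}) hzero ⟨y, fun x hx => ?_⟩
  by_contra! hxy
  exact Bool.false_ne_true (hx.symm.trans (hy x hxy))

lemma integral_comp_translate (E : EastProcess) {f : Config → ℝ} (hf : Continuous f) {t : ℝ}
    (ht : 0 ≤ t) (z : ℤ) (η : Config) :
    ∫ ξ, f (fun y => ξ (z + y)) ∂E.P t η = evolve E.P t f (shift z η) := by
  have hshift : Measurable (shift z) := by unfold shift; fun_prop
  rw [evolve, E.shiftComm t ht, integral_map hshift.aemeasurable hf.aestronglyMeasurable]
  exact integral_congr_ae (ae_of_all _ fun ξ => congrArg f (funext fun y => by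
    rw [shift, add_comm]))

lemma sqrt_div_pow_le {m : ℝ} (hm0 : 0 < m) (hm1 : m ≤ 1) (v : ℝ) (n : ℕ) :
    √(v / m ^ n) ≤ √v * (1 / m) ^ n := by
  rw [Real.sqrt_div' v (by positivity), div_eq_mul_inv, one_div, inv_pow]
  have hpow : 0 < m ^ n := pow_pos hm0 n
  gcongr
  exact Real.le_sqrt_of_sq_le (pow_le_of_le_one hpow.le (pow_le_one₀ hm0.le hm1) two_ne_zero)

theorem relaxation_at_front_intermediate_general (E : EastProcess) {n : ℕ} {f : Config → ℝ}
    (hsupp : DependsOnF f (Set.Ico (-(n : ℤ)) 0)) (hmean : ∫ ω, f ω ∂E.μ = 0)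
    (ν : Measure Config) [IsProbabilityMeasure ν] {s : ℝ} (hs : 0 ≤ s) :
    |∫ η in LO, (∫ ξ, f (fun y => ξ (front η + y)) ∂(E.P s η)) ∂ν| ≤
      √(variance f E.μ / min E.p (1 - E.p) ^ n) * Real.exp (-s * gap E) := by
  have hf : DependsOnF f (Finset.Ico (-(n : ℤ)) 0) := by rwa [Finset.coe_Ico]
  have hpointwise (η : Config) (hη : η ∈ LO) :
      ‖∫ ξ, f (fun y => ξ (front η + y)) ∂E.P s η‖ ≤
        √(variance f E.μ / min E.p (1 - E.p) ^ n) * Real.exp (-s * gap E) := by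
    rw [integral_comp_translate E hf.continuous hs, Real.norm_eq_abs]
    have hzero : shift (front η) η 0 = false := by simpa [shift] using apply_front_of_mem_LO hη
    simpa using abs_evolve_le_sqrt_variance_mul_exp (f := ⟨f, hf.continuous⟩) hf (by simp) hmean
      hzero hs
  refine (norm_setIntegral_le_of_norm_le_const (measure_lt_top ν LO) hpointwise).trans ?_
  exact mul_le_of_le_one_right (by positivity) measureReal_le_one

end Front

/-- **Relaxation behind the front at intermediate times** (Proposition 4.1 of the paper):
if `f` is a cylinder function with support in `⟦-xm, -xp⟧` (`1 ≤ xp ≤ xm`) and `μ(f) = 0`,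
then for every `ω ∈ LO₀` and `0 ≤ s ≤ t`,
`|E_ω[f(ω_{X(ω(t-s)) + ·}(t))]| ≤ Var_μ(f)^{1/2} (1/(p ∧ q))^{xm} e^{-s gap}`. -/
theorem relaxation_at_front_intermediate (E : EastProcess) (hgap : 0 < gap E)
    (xp xm : ℕ) (hxp : 1 ≤ xp) (hx : xp ≤ xm)
    (f : Config → ℝ) (hf : Measurable f)
    (hsupp : DependsOnF f (Set.Icc (-(xm : ℤ)) (-(xp : ℤ))))
    (hmean : ∫ ω, f ω ∂E.μ = 0)
    (ω : Config) (hω : ω ∈ LO₀) (s t : ℝ) (hs : 0 ≤ s) (hst : s ≤ t) :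
    |∫ η in LO, (∫ ξ, f (fun y => ξ (front η + y)) ∂(E.P s η)) ∂(E.P (t - s) ω)| ≤
      Real.sqrt (variance f E.μ) * (1 / min E.p (1 - E.p)) ^ xm *
        Real.exp (-s * gap E) := by
  have := E.markov (t - s)
  refine (relaxation_at_front_intermediate_general E (n := xm)
    (hsupp.mono fun y hy => ⟨hy.1, hy.2.trans_lt (by omega)⟩) hmean _ hs).trans ?_
  gcongr
  exact sqrt_div_pow_le (lt_min E.hp0 (sub_pos.2 E.hp1)) ((min_le_left _ _).trans E.hp1.le) _ _

end
end
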